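/- arXiv:2404.09746 — 10 statements merged into one kernel-verified Lean document; each statement's English description precedes it below -/
import Mathlib

section
/- Convergence of the gradient norm along the gradient flow (Euclidean case of Theorem 3.1(1)): suppose κ* := inf_{y ∈ ℝⁿ} ‖∇f(y)‖ > 0 and let x : [0,∞) → ℝⁿ be a gradient-flow trajectory of f. Then ‖∇f(x(t))‖ converges to κ* as t → ∞. -/
open Filter
open scoped RealInnerProductSpace

lemma gf_first_order {n : ℕ} (f : EuclideanSpace ℝ (Fin n) → ℝ)
    (hconv : ConvexOn ℝ Set.univ f) (hf : ContDiff ℝ 1 f) (x y : EuclideanSpace ℝ (Fin n)) :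
    f x + ⟪gradient f x, y - x⟫ ≤ f y := by
  have hd : HasGradientAt f (gradient f x) x :=
    ((hf.differentiable (by norm_num)) x).hasGradientAt
  have hc : ConvexOn ℝ Set.univ (fun s : ℝ => f (AffineMap.lineMap x y s)) := by
    exact hconv.comp_affineMap (AffineMap.lineMap x y : ℝ →ᵃ[ℝ] EuclideanSpace ℝ (Fin n))
  have hl : HasDerivAt (fun s : ℝ => (AffineMap.lineMap x y s : EuclideanSpace ℝ (Fin n)))
      (y - x) 0 := AffineMap.hasDerivAt_lineMap
  have hd' : HasFDerivAt f (InnerProductSpace.toDual ℝ _ (gradient f x))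
      (AffineMap.lineMap x y (0:ℝ)) := by
    simpa using hd.hasFDerivAt
  have h2 := hd'.comp_hasDerivAt (0:ℝ) hl
  have := hc.le_slope_of_hasDerivAt (Set.mem_univ (0:ℝ)) (Set.mem_univ (1:ℝ)) one_pos h2
  rw [InnerProductSpace.toDual_apply_apply] at this
  simp only [slope_def_field, AffineMap.lineMap_apply_zero, AffineMap.lineMap_apply_one,
    sub_zero, div_one] at this
  linarith

lemma gf_antitone (F F' : ℝ → ℝ) (h : ∀ t, 0 ≤ t → HasDerivAt F (F' t) t)
    (h' : ∀ t, 0 ≤ t → F' t ≤ 0) : AntitoneOn F (Set.Ici 0) := by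
  apply antitoneOn_of_deriv_nonpos (convex_Ici 0)
  · intro t ht
    exact (h t ht).continuousAt.continuousWithinAt
  · intro t ht
    rw [interior_Ici] at ht
    exact (h t (le_of_lt ht)).differentiableAt.differentiableWithinAt
  · intro t ht
    rw [interior_Ici] at ht
    rw [(h t (le_of_lt ht)).deriv]
    exact h' t (le_of_lt ht)

lemma gf_mono {n : ℕ} (f : EuclideanSpace ℝ (Fin n) → ℝ)
    (hconv : ConvexOn ℝ Set.univ f) (hf : ContDiff ℝ 1 f)
    (x : ℝ → EuclideanSpace ℝ (Fin n))
    (hx : ∀ t : ℝ, 0 ≤ t → HasDerivAt x (-(gradient f (x t))) t)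
    (s t : ℝ) (hs : 0 ≤ s) (hst : s ≤ t) :
    ‖gradient f (x t)‖ ≤ ‖gradient f (x s)‖ := by
  have key : ∀ h : ℝ, 0 < h → ‖x (t + h) - x t‖ ≤ ‖x (s + h) - x s‖ := by
    intro h hh
    have := gf_antitone (fun r => ‖x (r + h) - x r‖ ^ 2)
      (fun r => 2 * ⟪x (r + h) - x r, -(gradient f (x (r + h))) - -(gradient f (x r))⟫)
      (fun r hr => (((hx (r + h) (by linarith)).comp_add_const r h).sub (hx r hr)).norm_sq)
      (fun r hr => by
        have h1 := gf_first_order f hconv hf (x r) (x (r + h))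
        have h2 := gf_first_order f hconv hf (x (r + h)) (x r)
        simp only [inner_sub_left, inner_sub_right, inner_neg_right] at h1 h2 ⊢
        have c1 := real_inner_comm (x r) (gradient f (x r))
        have c2 := real_inner_comm (x r) (gradient f (x (r + h)))
        have c3 := real_inner_comm (x (r + h)) (gradient f (x r))
        have c4 := real_inner_comm (x (r + h)) (gradient f (x (r + h)))
        linarith) hs (hs.trans hst) hst
    exact (sq_le_sq₀ (norm_nonneg _) (norm_nonneg _)).1 this
  have lim : ∀ r, 0 ≤ r → Tendsto (fun h : ℝ => ‖h⁻¹ • (x (r + h) - x r)‖)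
      (nhdsWithin 0 (Set.Ioi 0)) (nhds ‖gradient f (x r)‖) := by
    intro r hr
    have := ((hasDerivAt_iff_tendsto_slope_zero.1 (hx r hr)).mono_left
      (nhdsWithin_mono 0 (fun y (hy : y ∈ Set.Ioi (0:ℝ)) => ne_of_gt hy) :
        nhdsWithin (0:ℝ) (Set.Ioi 0) ≤ _)).norm
    simpa using this
  refine le_of_tendsto_of_tendsto (lim t (hs.trans hst)) (lim s hs) ?_
  filter_upwards [self_mem_nhdsWithin] with h hh
  rw [norm_smul, norm_smul]
  exact mul_le_mul_of_nonneg_left (key h hh) (norm_nonneg _)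

lemma gf_lower {n : ℕ} (f : EuclideanSpace ℝ (Fin n) → ℝ)
    (hconv : ConvexOn ℝ Set.univ f) (hf : ContDiff ℝ 1 f)
    (x : ℝ → EuclideanSpace ℝ (Fin n))
    (hx : ∀ t : ℝ, 0 ≤ t → HasDerivAt x (-(gradient f (x t))) t)
    (L : ℝ) (hL0 : 0 ≤ L) (hL : ∀ t, 0 ≤ t → L ≤ ‖gradient f (x t)‖)
    (y : EuclideanSpace ℝ (Fin n)) : L ≤ ‖gradient f y‖ := by
  set k := ‖gradient f y‖ with hk
  have hk0 : 0 ≤ k := norm_nonneg _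
  have hle : ∀ z, ‖z‖ ≤ √(‖z‖ ^ 2 + 1) := fun z : EuclideanSpace ℝ (Fin n) =>
    Real.le_sqrt_of_sq_le (by linarith)
  have hlow : ∀ z, f y - f z ≤ k * ‖z - y‖ := by
    intro z
    have h1 := gf_first_order f hconv hf y z
    have h2 := abs_le.1 (abs_real_inner_le_norm (gradient f y) (z - y))
    linarith [h2.1]
  -- distance bound
  have hdist := gf_antitone (fun t => √(‖x t - y‖ ^ 2 + 1) - k * t)
    (fun t => (2 * ⟪x t - y, -(gradient f (x t))⟫) / (2 * √(‖x t - y‖ ^ 2 + 1)) - k * 1)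
    (fun t ht => ((((hx t ht).sub_const y).norm_sq.add_const 1).sqrt (by positivity)).sub
      ((hasDerivAt_id t).const_mul k))
    (fun t ht => by
      have h1 := gf_first_order f hconv hf (x t) y
      have h2 := hlow (x t)
      have h3 := mul_le_mul_of_nonneg_left (hle (x t - y)) hk0
      have h4 : ⟪x t - y, -(gradient f (x t))⟫ = ⟪gradient f (x t), y - x t⟫ := by
        rw [real_inner_comm, inner_neg_left, ← inner_neg_right, neg_sub]
      have hp : 0 < √(‖x t - y‖ ^ 2 + 1) := Real.sqrt_pos.2 (by positivity)
      rw [sub_nonpos, div_le_iff₀ (by positivity), h4]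
      linarith)
  have hen := gf_antitone (fun t => f (x t) + L ^ 2 * t)
    (fun t => ⟪gradient f (x t), -(gradient f (x t))⟫ + L ^ 2 * 1)
    (fun t ht => by
      have hd : HasGradientAt f (gradient f (x t)) (x t) :=
        ((hf.differentiable (by norm_num)) (x t)).hasGradientAt
      have h2 := hd.hasFDerivAt.comp_hasDerivAt t (hx t ht)
      rw [InnerProductSpace.toDual_apply_apply] at h2
      exact HasDerivAt.add h2 ((hasDerivAt_id t).const_mul (L ^ 2)))
    (fun t ht => by
      have := pow_le_pow_left₀ hL0 (hL t ht) 2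
      rw [inner_neg_right, real_inner_self_eq_norm_sq]
      linarith)
  by_contra hlt
  push Not at hlt
  have hpos : 0 < L ^ 2 - k ^ 2 := by nlinarith
  set C := f (x 0) - f y + k * √(‖x 0 - y‖ ^ 2 + 1) with hC
  have hall : ∀ t, 0 ≤ t → (L ^ 2 - k ^ 2) * t ≤ C := by
    intro t ht
    have h1 := hdist (Set.mem_Ici.2 le_rfl) (Set.mem_Ici.2 ht) ht
    have h2 := hen (Set.mem_Ici.2 le_rfl) (Set.mem_Ici.2 ht) ht
    simp only [mul_zero, sub_zero, add_zero] at h1 h2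
    have h3 := hlow (x t)
    have h4 : ‖x t - y‖ ≤ √(‖x 0 - y‖ ^ 2 + 1) + k * t := by linarith [hle (x t - y)]
    have h5 := mul_le_mul_of_nonneg_left h4 hk0
    rw [hC]
    nlinarith
  have hfin := hall ((|C| + 1) / (L ^ 2 - k ^ 2)) (by positivity)
  rw [mul_div_cancel₀ _ hpos.ne'] at hfin
  linarith [le_abs_self C]

/-- Convergence of the gradient norm along the gradient flow (Euclidean case of
Theorem 3.1(1)): if `κ* := inf_y ‖∇f(y)‖ > 0` and `x` is a gradient-flow trajectory
of the convex `C¹` function `f`, then `‖∇f(x(t))‖ → κ*` as `t → ∞`. -/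
theorem gradient_flow_gradient_norm_tendsto {n : ℕ} (hn : 1 ≤ n)
    (f : EuclideanSpace ℝ (Fin n) → ℝ)
    (hconv : ConvexOn ℝ Set.univ f) (hf : ContDiff ℝ 1 f)
    (hκ : 0 < ⨅ y, ‖gradient f y‖)
    (x : ℝ → EuclideanSpace ℝ (Fin n))
    (hx : ∀ t : ℝ, 0 ≤ t → HasDerivAt x (-(gradient f (x t))) t) :
    Tendsto (fun t => ‖gradient f (x t)‖) atTop (nhds (⨅ y, ‖gradient f y‖)) := by
  have hbdd : BddBelow (Set.range fun y => ‖gradient f y‖) :=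
    ⟨0, by rintro _ ⟨y, rfl⟩; exact norm_nonneg _⟩
  rw [Metric.tendsto_atTop]
  intro ε hε
  have hex : ∃ t, 0 ≤ t ∧ ‖gradient f (x t)‖ < (⨅ y, ‖gradient f y‖) + ε := by
    by_contra hcon
    push Not at hcon
    have h1 : (⨅ y, ‖gradient f y‖) + ε ≤ ⨅ y, ‖gradient f y‖ :=
      le_ciInf (gf_lower f hconv hf x hx _ (by positivity) hcon)
    linarith
  obtain ⟨N, hN, hlt⟩ := hex
  refine ⟨N, fun t ht => ?_⟩
  have h1 := gf_mono f hconv hf x hx N t hN ht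
  have h2 : (⨅ y, ‖gradient f y‖) ≤ ‖gradient f (x t)‖ := ciInf_le hbdd (x t)
  rw [Real.dist_eq, abs_of_nonneg (by linarith)]
  linarith
end

section
/- Directional convergence of the gradient flow to the minimizer of the recession function (Euclidean case of Theorem 3.1(2)): suppose κ* := inf_{y ∈ ℝⁿ} ‖∇f(y)‖ > 0 and let x : [0,∞) → ℝⁿ be a gradient-flow trajectory of f. Then ‖x(t)‖ → ∞ as t → ∞, and x(t)/‖x(t)‖ converges to a unit vector ξ* satisfying f^∞(ξ*) = −κ*; moreover ξ* is the unique unit vector u with f^∞(u) ≤ −κ*. -/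
open Filter
open scoped RealInnerProductSpace

/-- The recession function (asymptotic slope) of `f`:
`f^∞(u) = sup_{s>0} (f(su) - f(0))/s`, valued in `EReal`. -/
noncomputable def recessionFn {n : ℕ} (f : EuclideanSpace ℝ (Fin n) → ℝ)
    (u : EuclideanSpace ℝ (Fin n)) : EReal :=
  ⨆ (s : ℝ) (_ : 0 < s), (((f (s • u) - f 0) / s : ℝ) : EReal)

namespace GradFlowAux

variable {n : ℕ}

/-- First-order convexity inequality. -/
lemma grad_ineq (f : EuclideanSpace ℝ (Fin n) → ℝ)
    (hconv : ConvexOn ℝ Set.univ f) (hf : ContDiff ℝ 1 f) (a b : EuclideanSpace ℝ (Fin n)) :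
    f a + ⟪gradient f a, b - a⟫ ≤ f b := by
  have hd : HasFDerivAt f (fderiv ℝ f a) a :=
    (hf.differentiable (by norm_num) a).hasFDerivAt
  have h1 : ConvexOn ℝ Set.univ (fun t : ℝ => f (AffineMap.lineMap a b t)) := by
    exact hconv.comp_affineMap (AffineMap.lineMap (k := ℝ) a b)
  have h2 : HasDerivAt (fun t : ℝ => f (AffineMap.lineMap a b t)) (fderiv ℝ f a (b - a)) 0 := by
    have h3 : HasDerivAt (fun t : ℝ => (AffineMap.lineMap a b t : EuclideanSpace ℝ (Fin n)))
        (b - a) 0 := AffineMap.hasDerivAt_lineMap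
    have h4 : HasFDerivAt f (fderiv ℝ f a) (AffineMap.lineMap a b (0:ℝ)) := by simpa using hd
    exact h4.comp_hasDerivAt (0:ℝ) h3
  have h5 := h1.le_slope_of_hasDerivAt (Set.mem_univ 0) (Set.mem_univ 1) one_pos h2
  rw [slope_def_field] at h5
  simp only [AffineMap.lineMap_apply_one, AffineMap.lineMap_apply_zero] at h5
  rw [inner_gradient_left]
  linarith

/-- The effective domain of the conjugate of `f`. -/
def dom (f : EuclideanSpace ℝ (Fin n) → ℝ) : Set (EuclideanSpace ℝ (Fin n)) :=
  {p | ∃ c : ℝ, ∀ y, ⟪p, y⟫ - c ≤ f y}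

lemma grad_mem (f : EuclideanSpace ℝ (Fin n) → ℝ)
    (hconv : ConvexOn ℝ Set.univ f) (hf : ContDiff ℝ 1 f) (a : EuclideanSpace ℝ (Fin n)) :
    gradient f a ∈ dom f := by
  refine ⟨⟪gradient f a, a⟫ - f a, fun y => ?_⟩
  have := grad_ineq f hconv hf a y
  rw [inner_sub_right] at this
  linarith

lemma dom_convex (f : EuclideanSpace ℝ (Fin n) → ℝ) : Convex ℝ (dom f) := by
  rintro p ⟨c, hc⟩ q ⟨d, hd⟩ a b ha hb hab
  refine ⟨a * c + b * d, fun y => ?_⟩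
  rw [inner_add_left, real_inner_smul_left, real_inner_smul_left]
  have h1 := mul_le_mul_of_nonneg_left (hc y) ha
  have h2 := mul_le_mul_of_nonneg_left (hd y) hb
  have h3 : f y = a * f y + b * f y := by rw [← add_mul, hab, one_mul]
  rw [h3]; linarith

/-- Elements of the domain of the conjugate are limits of gradients. -/
lemma le_norm_of_mem (f : EuclideanSpace ℝ (Fin n) → ℝ)
    (hf : ContDiff ℝ 1 f) {p : EuclideanSpace ℝ (Fin n)} (hp : p ∈ dom f) :
    (⨅ y, ‖gradient f y‖) ≤ ‖p‖ := by
  obtain ⟨c, hc⟩ := hp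
  refine le_of_forall_pos_le_add fun η hη => ?_
  have hK : (0:ℝ) < |c + f 0| + 1 := by positivity
  obtain ⟨ε, hε, hεη⟩ : ∃ ε : ℝ, 0 < ε ∧ 2 * ε * (|c + f 0| + 1) = η ^ 2 :=
    ⟨η ^ 2 / (2 * (|c + f 0| + 1)), by positivity, by field_simp⟩
  let F : EuclideanSpace ℝ (Fin n) → ℝ := fun y => f y - ⟪p, y⟫ + ε / 2 * ‖y‖ ^ 2
  have hF0 : F 0 = f 0 := by simp [F]
  have hfc := hf.continuous
  have hFc : Continuous F := by fun_prop
  have key : ∀ y, F y ≤ F 0 → (ε * ‖y‖) ^ 2 ≤ η ^ 2 := by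
    intro y hy
    rw [hF0] at hy
    have h1 : ε / 2 * ‖y‖ ^ 2 ≤ |c + f 0| + 1 := by
      have := hc y
      have h2 := le_abs_self (c + f 0)
      simp only [F] at hy
      linarith
    calc (ε * ‖y‖) ^ 2 = 2 * ε * (ε / 2 * ‖y‖ ^ 2) := by ring
      _ ≤ 2 * ε * (|c + f 0| + 1) := by gcongr
      _ = η ^ 2 := hεη
  obtain ⟨y, hy⟩ := hFc.exists_forall_le_of_isBounded 0 (by
    refine (Metric.isBounded_closedBall (x := (0 : EuclideanSpace ℝ (Fin n)))
      (r := η / ε)).subset ?_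
    intro y hy
    have h1 := abs_le_of_sq_le_sq (key y hy) hη.le
    rw [abs_le] at h1
    rw [mem_closedBall_zero_iff, le_div_iff₀ hε]
    linarith [h1.2])
  have hder : HasFDerivAt F (fderiv ℝ f y - innerSL ℝ p + (ε / 2) • (2 • innerSL ℝ y)) y := by
    have h1 : HasFDerivAt f (fderiv ℝ f y) y :=
      (hf.differentiable (by norm_num) y).hasFDerivAt
    have h2 : HasFDerivAt (fun z => ⟪p, z⟫) (innerSL ℝ p) y := (innerSL ℝ p).hasFDerivAt
    have h3 : HasFDerivAt (fun z : EuclideanSpace ℝ (Fin n) => ‖z‖ ^ 2) (2 • innerSL ℝ y) y :=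
      (hasStrictFDerivAt_norm_sq y).hasFDerivAt
    exact (h1.sub h2).add (h3.const_mul (ε / 2))
  have hz : fderiv ℝ f y - innerSL ℝ p + (ε / 2) • (2 • innerSL ℝ y) = 0 :=
    IsLocalMin.hasFDerivAt_eq_zero (Filter.Eventually.of_forall hy) hder
  have hg : gradient f y = p - ε • y := by
    refine ext_inner_right ℝ fun w => ?_
    have := DFunLike.congr_fun hz w
    simp at this
    rw [inner_gradient_left, inner_sub_left, real_inner_smul_left]
    linarith
  have h1 := abs_le_of_sq_le_sq (key y (hy 0)) hη.le
  rw [abs_le] at h1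
  calc (⨅ y, ‖gradient f y‖) ≤ ‖gradient f y‖ :=
        ciInf_le ⟨0, by rintro _ ⟨z, rfl⟩; exact norm_nonneg _⟩ y
    _ ≤ ‖p‖ + ‖ε • y‖ := by rw [hg]; exact norm_sub_le _ _
    _ ≤ ‖p‖ + η := by
        rw [norm_smul, Real.norm_of_nonneg hε.le]; linarith [h1.2]

/-- The minimal norm element. -/
lemma exists_min (f : EuclideanSpace ℝ (Fin n) → ℝ)
    (hconv : ConvexOn ℝ Set.univ f) (hf : ContDiff ℝ 1 f) :
    ∃ v : EuclideanSpace ℝ (Fin n), -v ∈ closure (dom f) ∧ ‖v‖ = (⨅ y, ‖gradient f y‖) ∧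
      ∀ y, ⟪gradient f y, v⟫ ≤ - ‖v‖ ^ 2 := by
  have hc : Convex ℝ (closure (dom f)) := (dom_convex f).closure
  have hne : (closure (dom f)).Nonempty := ⟨_, subset_closure (grad_mem f hconv hf 0)⟩
  obtain ⟨q, hq, hmin⟩ := exists_norm_eq_iInf_of_complete_convex hne
    isClosed_closure.isComplete hc 0
  have hin := (norm_eq_iInf_iff_real_inner_le_zero hc hq).1 hmin
  have hin' : ∀ y, ‖q‖ ^ 2 ≤ ⟪gradient f y, q⟫ := by
    intro y
    have := hin _ (subset_closure (grad_mem f hconv hf y))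
    rw [zero_sub, inner_neg_left, inner_sub_right, real_inner_self_eq_norm_sq,
      real_inner_comm] at this
    linarith
  refine ⟨-q, by simpa using hq, ?_, fun y => ?_⟩
  · rw [norm_neg]
    apply le_antisymm
    · refine le_ciInf fun y => ?_
      have h1 := (hin' y).trans (real_inner_le_norm _ _)
      rcases (norm_nonneg q).eq_or_lt with h | h
      · rw [← h]; exact norm_nonneg _
      · rw [pow_two] at h1
        exact le_of_mul_le_mul_right h1 h
    · have hcl : IsClosed {p : EuclideanSpace ℝ (Fin n) | (⨅ y, ‖gradient f y‖) ≤ ‖p‖} :=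
        isClosed_le continuous_const continuous_norm
      exact closure_minimal (fun p hp => le_norm_of_mem f hf hp) hcl hq
  · rw [inner_neg_right, norm_neg]
    linarith [hin' y]

lemma flow_bound (f : EuclideanSpace ℝ (Fin n) → ℝ)
    (hconv : ConvexOn ℝ Set.univ f) (hf : ContDiff ℝ 1 f)
    (x : ℝ → EuclideanSpace ℝ (Fin n))
    (hx : ∀ t : ℝ, 0 ≤ t → HasDerivAt x (-(gradient f (x t))) t)
    (v : EuclideanSpace ℝ (Fin n)) (hv : -v ∈ closure (dom f))
    (hvg : ∀ y, ⟪gradient f y, v⟫ ≤ - ‖v‖ ^ 2) {ε : ℝ} (hε : 0 < ε) :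
    ∀ᶠ t in atTop, ‖x t - t • v‖ ^ 2 ≤ 6 * ε * (1 + t) ^ 2 := by
  obtain ⟨δ, hδ, hδε⟩ : ∃ δ : ℝ, 0 < δ ∧ δ * ‖v‖ + δ ^ 2 / 2 ≤ ε := by
    refine ⟨min 1 (ε / (‖v‖ + 1)), by positivity, ?_⟩
    set δ := min 1 (ε / (‖v‖ + 1))
    have h0 : 0 < δ := by positivity
    have h1 : δ ≤ 1 := min_le_left _ _
    have h2 : δ * (‖v‖ + 1) ≤ ε := by
      rw [← le_div_iff₀ (by positivity)]; exact min_le_right _ _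
    nlinarith
  obtain ⟨p, ⟨c, hc⟩, hp⟩ := Metric.mem_closure_iff.1 hv δ hδ
  have hpv : ‖p + v‖ ≤ δ := by
    rw [dist_comm, dist_eq_norm, sub_neg_eq_add] at hp; exact hp.le
  set C := f 0 + c with hC
  have hmain : ∀ t : ℝ, 0 ≤ t → ⟪x t - t • v, -(gradient f (x t)) - v⟫ ≤
      C + δ * ‖v‖ * t + δ * ‖x t - t • v‖ := by
    intro t ht
    have g1 := grad_ineq f hconv hf (x t) (t • v)
    have g2 := grad_ineq f hconv hf (t • v) 0
    have g3 := mul_le_mul_of_nonneg_left (hvg (t • v)) ht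
    rw [zero_sub, inner_neg_right, real_inner_smul_right] at g2
    have g4 := hc (x t)
    have g5 : -⟪p + v, x t - t • v⟫ ≤ δ * ‖x t - t • v‖ := by
      have := (neg_le_abs _).trans (abs_real_inner_le_norm (p + v) (x t - t • v))
      exact this.trans (by gcongr)
    have g6 : -⟪p + v, v⟫ ≤ δ * ‖v‖ := by
      have := (neg_le_abs _).trans (abs_real_inner_le_norm (p + v) v)
      exact this.trans (by gcongr)
    have g7 := mul_le_mul_of_nonneg_left g6 ht
    have e1 : ⟪x t - t • v, -(gradient f (x t)) - v⟫ =
        ⟪gradient f (x t), t • v - x t⟫ - ⟪v, x t⟫ + t * ‖v‖ ^ 2 := by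
      rw [real_inner_comm, ← real_inner_self_eq_norm_sq]
      simp only [inner_sub_left, inner_sub_right, inner_neg_left, real_inner_smul_right]
      ring
    have e2 : ⟪p + v, x t - t • v⟫ =
        ⟪p, x t⟫ + ⟪v, x t⟫ - t * ⟪p + v, v⟫ := by
      simp only [inner_sub_right, inner_add_left, real_inner_smul_right]
      ring
    rw [e2] at g5
    rw [e1]
    linarith
  let Φ : ℝ → ℝ := fun t => ‖x t - t • v‖ ^ 2 / (2 * (1 + t)) - 2 * ε * t
  let Φ' : ℝ → ℝ := fun t => (2 * ⟪x t - t • v, -(gradient f (x t)) - v⟫ * (2 * (1 + t)) -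
    ‖x t - t • v‖ ^ 2 * 2) / (2 * (1 + t)) ^ 2 - 2 * ε
  have hΦ : ∀ t : ℝ, 0 ≤ t → HasDerivAt Φ (Φ' t) t := by
    intro t ht
    have h1 : HasDerivAt (fun t => x t - t • v) (-(gradient f (x t)) - v) t := by
      have := (hx t ht).sub ((hasDerivAt_id t).smul_const v)
      rw [one_smul] at this
      exact this
    have h2 : HasDerivAt (fun t : ℝ => 2 * (1 + t)) 2 t := by
      simpa using ((hasDerivAt_id t).const_add 1).const_mul 2
    have h3 : HasDerivAt (fun t : ℝ => 2 * ε * t) (2 * ε) t := by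
      simpa using (hasDerivAt_id t).const_mul (2 * ε)
    exact (h1.norm_sq.div h2 (by positivity)).sub h3
  set T := |C| / ε with hT
  have hT0 : 0 ≤ T := by positivity
  have hneg : ∀ t, T ≤ t → Φ' t ≤ 0 := by
    intro t ht
    have ht0 : 0 ≤ t := hT0.trans ht
    have h1 := hmain t ht0
    have h2 : C ≤ ε * t := by
      rw [hT, div_le_iff₀ hε] at ht
      linarith [le_abs_self C]
    simp only [Φ', sub_nonpos]
    rw [div_le_iff₀ (by positivity)]
    set w := ‖x t - t • v‖
    set I := ⟪x t - t • v, -(gradient f (x t)) - v⟫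
    have hw : 0 ≤ w := norm_nonneg _
    have hs : 0 < 1 + t := by positivity
    have h3 : I * (1 + t) ≤ (ε * t + δ * ‖v‖ * t + δ * w) * (1 + t) := by
      gcongr; linarith
    have h4 : δ * w * (1 + t) ≤ w ^ 2 / 2 + δ ^ 2 / 2 * (1 + t) ^ 2 := by
      nlinarith [sq_nonneg (w - δ * (1 + t))]
    have h5 : (δ * ‖v‖ + δ ^ 2 / 2) * (1 + t) ^ 2 ≤ ε * (1 + t) ^ 2 := by gcongr
    have h6 : (ε * t + δ * ‖v‖ * t) * (1 + t) ≤ (ε + δ * ‖v‖) * (1 + t) ^ 2 := by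
      have : 0 ≤ (ε + δ * ‖v‖) * (1 + t) := by positivity
      nlinarith
    nlinarith
  have hanti : AntitoneOn Φ (Set.Ici T) := by
    refine antitoneOn_of_deriv_nonpos (convex_Ici T) ?_ ?_ ?_
    · exact fun t ht => (hΦ t (hT0.trans ht)).continuousAt.continuousWithinAt
    · intro t ht
      rw [interior_Ici] at ht
      exact (hΦ t (hT0.trans (le_of_lt ht))).differentiableAt.differentiableWithinAt
    · intro t ht
      rw [interior_Ici] at ht
      rw [(hΦ t (hT0.trans (le_of_lt ht))).deriv]
      exact hneg t (le_of_lt ht)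
  filter_upwards [eventually_ge_atTop T, eventually_ge_atTop (Φ T / ε)] with t ht ht2
  have ht0 : 0 ≤ t := hT0.trans ht
  have h1 := hanti (Set.mem_Ici.2 le_rfl) (Set.mem_Ici.2 ht) ht
  rw [div_le_iff₀ hε] at ht2
  have h2 : ‖x t - t • v‖ ^ 2 / (2 * (1 + t)) ≤ 3 * ε * t := by
    have : Φ t = ‖x t - t • v‖ ^ 2 / (2 * (1 + t)) - 2 * ε * t := rfl
    linarith
  rw [div_le_iff₀ (by positivity)] at h2
  have : 0 ≤ ε * (1 + t) := by positivity
  nlinarith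

lemma flow_tendsto (f : EuclideanSpace ℝ (Fin n) → ℝ)
    (hconv : ConvexOn ℝ Set.univ f) (hf : ContDiff ℝ 1 f)
    (x : ℝ → EuclideanSpace ℝ (Fin n))
    (hx : ∀ t : ℝ, 0 ≤ t → HasDerivAt x (-(gradient f (x t))) t)
    (v : EuclideanSpace ℝ (Fin n)) (hv : -v ∈ closure (dom f))
    (hvg : ∀ y, ⟪gradient f y, v⟫ ≤ - ‖v‖ ^ 2) :
    Tendsto (fun t : ℝ => t⁻¹ • x t) atTop (nhds v) := by
  rw [Metric.tendsto_nhds]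
  intro η hη
  have hε : 0 < η ^ 2 / 96 := by positivity
  filter_upwards [flow_bound f hconv hf x hx v hv hvg hε, eventually_ge_atTop 1] with t ht ht1
  have ht0 : 0 < t := by linarith
  have h1 : ‖x t - t • v‖ ^ 2 ≤ (η / 2 * t) ^ 2 := by
    refine ht.trans ?_
    have : (1 + t) ^ 2 ≤ (2 * t) ^ 2 := by gcongr; linarith
    have := mul_le_mul_of_nonneg_left this hε.le
    nlinarith
  have h2 := abs_le_of_sq_le_sq h1 (by positivity)
  rw [abs_le] at h2
  have h3 : t⁻¹ • x t - v = t⁻¹ • (x t - t • v) := by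
    rw [smul_sub, smul_smul, inv_mul_cancel₀ ht0.ne', one_smul]
  rw [dist_eq_norm, h3, norm_smul, norm_inv, Real.norm_of_nonneg ht0.le, inv_mul_lt_iff₀ ht0]
  have : η / 2 * t < t * η := by nlinarith
  linarith [h2.2]

lemma inner_le_of_recession (f : EuclideanSpace ℝ (Fin n) → ℝ) (u : EuclideanSpace ℝ (Fin n))
    (r : ℝ) (h : recessionFn f u ≤ (r : EReal)) (p : EuclideanSpace ℝ (Fin n))
    (hp : p ∈ closure (dom f)) : ⟪p, u⟫ ≤ r := by
  have hcl : IsClosed {p : EuclideanSpace ℝ (Fin n) | ⟪p, u⟫ ≤ r} :=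
    isClosed_le (by fun_prop) continuous_const
  refine closure_minimal ?_ hcl hp
  rintro p ⟨c, hc⟩
  show ⟪p, u⟫ ≤ r
  refine le_of_forall_pos_le_add fun η hη => ?_
  set s := (|c + f 0| + 1) / η with hs
  have hs0 : 0 < s := by positivity
  have h1 : (f (s • u) - f 0) / s ≤ r := by
    rw [recessionFn, iSup₂_le_iff] at h
    exact_mod_cast h s hs0
  rw [div_le_iff₀ hs0] at h1
  have h2 := hc (s • u)
  rw [real_inner_smul_right] at h2
  have h3 : s * η = |c + f 0| + 1 := by rw [hs]; field_simp
  have h4 := le_abs_self (c + f 0)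
  refine le_of_mul_le_mul_left ?_ hs0
  linarith

end GradFlowAux

/-- Directional convergence of the gradient flow to the minimizer of the recession
function (Euclidean case of Theorem 3.1(2)): if `κ* := inf_y ‖∇f(y)‖ > 0` and `x` is
a gradient-flow trajectory of `f`, then `‖x(t)‖ → ∞` and `x(t)/‖x(t)‖` converges to
a unit vector `ξ*` with `f^∞(ξ*) = -κ*`, which is the unique unit vector `u` with
`f^∞(u) ≤ -κ*`. -/
theorem gradient_flow_directional_convergence {n : ℕ} (hn : 1 ≤ n)
    (f : EuclideanSpace ℝ (Fin n) → ℝ)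
    (hconv : ConvexOn ℝ Set.univ f) (hf : ContDiff ℝ 1 f)
    (hκ : 0 < ⨅ y, ‖gradient f y‖)
    (x : ℝ → EuclideanSpace ℝ (Fin n))
    (hx : ∀ t : ℝ, 0 ≤ t → HasDerivAt x (-(gradient f (x t))) t) :
    Tendsto (fun t => ‖x t‖) atTop atTop ∧
    ∃ ξ : EuclideanSpace ℝ (Fin n), ‖ξ‖ = 1 ∧
      Tendsto (fun t => ‖x t‖⁻¹ • x t) atTop (nhds ξ) ∧
      recessionFn f ξ = ((-(⨅ y, ‖gradient f y‖) : ℝ) : EReal) ∧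
      ∀ u : EuclideanSpace ℝ (Fin n), ‖u‖ = 1 →
        recessionFn f u ≤ ((-(⨅ y, ‖gradient f y‖) : ℝ) : EReal) → u = ξ := by
  obtain ⟨v, hv, hvκ, hvg⟩ := GradFlowAux.exists_min f hconv hf
  have hT := GradFlowAux.flow_tendsto f hconv hf x hx v hv hvg
  rw [← hvκ] at hκ ⊢
  have hv0 : v ≠ 0 := norm_pos_iff.1 hκ
  have hN : Tendsto (fun t : ℝ => t⁻¹ * ‖x t‖) atTop (nhds ‖v‖) := by
    refine hT.norm.congr' ?_
    filter_upwards [eventually_ge_atTop 0] with t ht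
    rw [norm_smul, norm_inv, Real.norm_of_nonneg ht]
  have hpv : ∀ u : EuclideanSpace ℝ (Fin n), ∀ r : ℝ, recessionFn f u ≤ (r : EReal) →
      -r ≤ ⟪v, u⟫ := by
    intro u r h
    have := GradFlowAux.inner_le_of_recession f u r h (-v) hv
    rw [inner_neg_left] at this
    linarith
  have hξ : ‖(‖v‖⁻¹ • v)‖ = 1 := by
    rw [norm_smul, norm_inv, norm_norm, inv_mul_cancel₀ hκ.ne']
  refine ⟨?_, ‖v‖⁻¹ • v, hξ, ?_, ?_, ?_⟩
  · refine (tendsto_id.atTop_mul_pos hκ hN).congr' ?_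
    filter_upwards [eventually_gt_atTop 0] with t ht
    simp only [id]
    field_simp
  · refine ((hN.inv₀ hκ.ne').smul hT).congr' ?_
    filter_upwards [eventually_gt_atTop 0] with t ht
    rw [smul_smul, mul_inv, inv_inv, mul_right_comm, mul_inv_cancel₀ ht.ne', one_mul]
  · have hle : recessionFn f (‖v‖⁻¹ • v) ≤ ((-‖v‖ : ℝ) : EReal) := by
      refine iSup₂_le fun s hs => ?_
      norm_cast
      rw [div_le_iff₀ hs]
      have g := GradFlowAux.grad_ineq f hconv hf (s • ‖v‖⁻¹ • v) 0
      rw [zero_sub, inner_neg_right, real_inner_smul_right, real_inner_smul_right] at g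
      have h1 := hvg (s • ‖v‖⁻¹ • v)
      have h2 : s * (‖v‖⁻¹ * ⟪gradient f (s • ‖v‖⁻¹ • v), v⟫) ≤ s * (‖v‖⁻¹ * (- ‖v‖ ^ 2)) := by
        gcongr
      have h3 : s * (‖v‖⁻¹ * (- ‖v‖ ^ 2)) = -‖v‖ * s := by field_simp
      linarith
    refine le_antisymm hle ?_
    refine EReal.le_of_forall_lt_iff_le.1 fun r hr => ?_
    have h1 := hpv _ r hr.le
    rw [real_inner_smul_right, real_inner_self_eq_norm_sq] at h1
    have h3 : ‖v‖⁻¹ * ‖v‖ ^ 2 = ‖v‖ := by field_simp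
    norm_cast
    linarith
  · intro u hu h
    have h1 := hpv u _ h
    have h2 := real_inner_le_norm v u
    rw [hu] at h2
    have h3 : ⟪v, u⟫ = ‖v‖ * ‖u‖ := by rw [hu]; linarith
    rw [inner_eq_norm_mul_iff_real, hu, one_smul] at h3
    rw [eq_inv_smul_iff₀ hκ.ne']
    exact h3.symm
end

section
/- Velocity of escape of the gradient flow (Euclidean case of Proposition 3.4): suppose κ* := inf_{y ∈ ℝⁿ} ‖∇f(y)‖ > 0 and let x : [0,∞) → ℝⁿ be a gradient-flow trajectory of f. Then lim_{t→∞} ‖x(t) − x(0)‖ / t = κ*. -/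
open Filter
open scoped RealInnerProductSpace

lemma aux_grad_ineq {n : ℕ} (f : EuclideanSpace ℝ (Fin n) → ℝ)
    (hconv : ConvexOn ℝ Set.univ f) (hf : ContDiff ℝ 1 f)
    (y z : EuclideanSpace ℝ (Fin n)) :
    f y + ⟪gradient f y, z - y⟫ ≤ f z := by
  have hd : HasGradientAt f (gradient f y) y :=
    ((hf.differentiable (by norm_num)) y).hasGradientAt
  have hc : ConvexOn ℝ Set.univ (f ∘ (AffineMap.lineMap y z : ℝ →ᵃ[ℝ] _)) := by
    simpa using hconv.comp_affineMap (AffineMap.lineMap y z : ℝ →ᵃ[ℝ] _)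
  have hl : HasDerivAt (AffineMap.lineMap y z : ℝ →ᵃ[ℝ] _) (z - y) (0 : ℝ) :=
    AffineMap.hasDerivAt_lineMap
  have h0 : HasFDerivAt f (InnerProductSpace.toDual ℝ _ (gradient f y))
      ((AffineMap.lineMap y z : ℝ →ᵃ[ℝ] _) (0 : ℝ)) := by
    simpa using hd.hasFDerivAt
  have h1 := h0.comp_hasDerivAt (0 : ℝ) hl
  have h2 := hc.le_slope_of_hasDerivAt (Set.mem_univ 0) (Set.mem_univ 1) one_pos h1
  rw [InnerProductSpace.toDual_apply_apply, slope_def_field] at h2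
  simp only [Function.comp_apply, AffineMap.lineMap_apply_zero, AffineMap.lineMap_apply_one,
    sub_zero, div_one] at h2
  linarith

lemma aux_mono (g g' : ℝ → ℝ) (h : ∀ t, 0 ≤ t → HasDerivAt g (g' t) t)
    (hn : ∀ t, 0 ≤ t → g' t ≤ 0) (t : ℝ) (ht : 0 ≤ t) : g t ≤ g 0 := by
  have : AntitoneOn g (Set.Ici 0) := by
    apply antitoneOn_of_hasDerivWithinAt_nonpos (f' := g') (convex_Ici 0)
    · intro s hs
      exact (h s hs).continuousAt.continuousWithinAt
    · intro s hs
      rw [interior_Ici] at hs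
      exact (h s (le_of_lt hs)).hasDerivWithinAt
    · intro s hs
      rw [interior_Ici] at hs
      exact hn s (le_of_lt hs)
  exact this (Set.mem_Ici.2 le_rfl) ht ht

lemma aux_upper {n : ℕ} (f : EuclideanSpace ℝ (Fin n) → ℝ)
    (hconv : ConvexOn ℝ Set.univ f) (hf : ContDiff ℝ 1 f)
    (x : ℝ → EuclideanSpace ℝ (Fin n))
    (hx : ∀ t : ℝ, 0 ≤ t → HasDerivAt x (-(gradient f (x t))) t)
    (y : EuclideanSpace ℝ (Fin n)) (t : ℝ) (ht : 0 ≤ t) :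
    ‖x t - y‖ ≤ √(‖x 0 - y‖ ^ 2 + 1) + ‖gradient f y‖ * t := by
  have key := aux_mono (fun t => √(‖x t - y‖ ^ 2 + 1) - ‖gradient f y‖ * t)
    (fun t => (2 * ⟪x t - y, -(gradient f (x t))⟫) / (2 * √(‖x t - y‖ ^ 2 + 1))
      - ‖gradient f y‖) ?_ ?_ t ht
  · have : ‖x t - y‖ ≤ √(‖x t - y‖ ^ 2 + 1) := Real.le_sqrt_of_sq_le (by linarith)
    simp at key
    linarith
  · intro s hs
    have h1 := ((((hx s hs).sub_const y).norm_sq).add_const 1).sqrt (by positivity)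
    have h2 := h1.sub ((hasDerivAt_id s).const_mul ‖gradient f y‖)
    rw [mul_one] at h2
    exact h2
  · intro s hs
    have hw : 0 < √(‖x s - y‖ ^ 2 + 1) := by positivity
    have hle : ‖x s - y‖ ≤ √(‖x s - y‖ ^ 2 + 1) := Real.le_sqrt_of_sq_le (by linarith)
    have g1 := aux_grad_ineq f hconv hf y (x s)
    have g2 := aux_grad_ineq f hconv hf (x s) y
    have g3 := abs_real_inner_le_norm (gradient f y) (x s - y)
    have g4 := neg_abs_le ⟪gradient f y, x s - y⟫
    have g5 : ⟪x s - y, -(gradient f (x s))⟫ = ⟪gradient f (x s), y - x s⟫ := by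
      rw [real_inner_comm, ← neg_sub (x s) y, inner_neg_right, inner_neg_left]
    have g6 := mul_le_mul_of_nonneg_left hle (norm_nonneg (gradient f y))
    rw [sub_nonpos, div_le_iff₀ (by positivity), g5]
    linarith

lemma aux_descent {n : ℕ} (f : EuclideanSpace ℝ (Fin n) → ℝ) (hf : ContDiff ℝ 1 f)
    (hκ : 0 < ⨅ y, ‖gradient f y‖)
    (x : ℝ → EuclideanSpace ℝ (Fin n))
    (hx : ∀ t : ℝ, 0 ≤ t → HasDerivAt x (-(gradient f (x t))) t)
    (t : ℝ) (ht : 0 ≤ t) :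
    f (x t) + (⨅ y, ‖gradient f y‖) ^ 2 * t ≤ f (x 0) := by
  have key := aux_mono (fun t => f (x t) + (⨅ y, ‖gradient f y‖) ^ 2 * t)
    (fun t => -‖gradient f (x t)‖ ^ 2 + (⨅ y, ‖gradient f y‖) ^ 2) ?_ ?_ t ht
  · simpa using key
  · intro s hs
    have hd : HasGradientAt f (gradient f (x s)) (x s) :=
      ((hf.differentiable (by norm_num)) (x s)).hasGradientAt
    have h1 := hd.hasFDerivAt.comp_hasDerivAt s (hx s hs)
    have h2 := h1.add ((hasDerivAt_id s).const_mul ((⨅ y, ‖gradient f y‖) ^ 2))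
    rw [mul_one, InnerProductSpace.toDual_apply_apply, inner_neg_right,
      real_inner_self_eq_norm_sq] at h2
    exact h2
  · intro s hs
    have : (⨅ y, ‖gradient f y‖) ≤ ‖gradient f (x s)‖ :=
      ciInf_le ⟨0, by rintro _ ⟨y, rfl⟩; exact norm_nonneg _⟩ (x s)
    have := pow_le_pow_left₀ hκ.le this 2
    linarith

/-- Velocity of escape of the gradient flow (Euclidean case of Proposition 3.4):
if `κ* := inf_y ‖∇f(y)‖ > 0` and `x` is a gradient-flow trajectory of `f`, then
`‖x(t) - x(0)‖ / t → κ*` as `t → ∞`. -/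
theorem gradient_flow_velocity_of_escape {n : ℕ} (hn : 1 ≤ n)
    (f : EuclideanSpace ℝ (Fin n) → ℝ)
    (hconv : ConvexOn ℝ Set.univ f) (hf : ContDiff ℝ 1 f)
    (hκ : 0 < ⨅ y, ‖gradient f y‖)
    (x : ℝ → EuclideanSpace ℝ (Fin n))
    (hx : ∀ t : ℝ, 0 ≤ t → HasDerivAt x (-(gradient f (x t))) t) :
    Tendsto (fun t => ‖x t - x 0‖ / t) atTop (nhds (⨅ y, ‖gradient f y‖)) := by
  have hD := aux_descent f hf hκ x hx
  have hU := aux_upper f hconv hf x hx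
  have hpos : ∀ y, 0 < ‖gradient f y‖ := fun y => lt_of_lt_of_le hκ
    (ciInf_le ⟨0, by rintro _ ⟨y, rfl⟩; exact norm_nonneg _⟩ y)
  have hex : ∀ b, (⨅ y, ‖gradient f y‖) < b → ∃ y, ‖gradient f y‖ < b :=
    fun b hb => exists_lt_of_ciInf_lt hb
  generalize (⨅ y, ‖gradient f y‖) = κ at *
  rw [tendsto_order]
  constructor
  · intro a ha
    obtain ⟨y, hy⟩ : ∃ y, a * ‖gradient f y‖ < κ ^ 2 := by
      rcases le_or_gt a 0 with h | h
      · exact ⟨0, lt_of_le_of_lt (mul_nonpos_of_nonpos_of_nonneg h (norm_nonneg _))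
          (by positivity)⟩
      · obtain ⟨y, hy⟩ := hex (κ ^ 2 / a) (by rw [lt_div_iff₀ h]; nlinarith)
        exact ⟨y, by rw [lt_div_iff₀ h] at hy; linarith⟩
    have hG := hpos y
    set G := ‖gradient f y‖ with hGdef
    filter_upwards [eventually_gt_atTop 0,
      eventually_gt_atTop ((f (x 0) - f y + G * ‖x 0 - y‖) / (κ ^ 2 - a * G))] with t ht ht2
    rw [div_lt_iff₀ (by linarith)] at ht2
    rw [lt_div_iff₀ ht]
    have g1 := aux_grad_ineq f hconv hf y (x t)
    have g3 := abs_real_inner_le_norm (gradient f y) (x t - y)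
    have g4 := neg_abs_le ⟪gradient f y, x t - y⟫
    have g5 : ‖x t - y‖ ≤ ‖x t - x 0‖ + ‖x 0 - y‖ := norm_sub_le_norm_sub_add_norm_sub _ _ _
    have g6 := mul_le_mul_of_nonneg_left g5 hG.le
    have g7 := hD t ht.le
    rw [← hGdef] at g3
    refine lt_of_mul_lt_mul_left ?_ hG.le
    linarith
  · intro b hb
    obtain ⟨y, hy⟩ := hex b hb
    filter_upwards [eventually_gt_atTop 0,
      eventually_gt_atTop ((√(‖x 0 - y‖ ^ 2 + 1) + ‖x 0 - y‖) / (b - ‖gradient f y‖))]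
      with t ht ht2
    rw [div_lt_iff₀ (by linarith)] at ht2
    rw [div_lt_iff₀ ht]
    have g1 := hU y t ht.le
    have g5 : ‖x t - x 0‖ ≤ ‖x t - y‖ + ‖y - x 0‖ := norm_sub_le_norm_sub_add_norm_sub _ _ _
    rw [norm_sub_rev y] at g5
    linarith
end

section
/- One-step descent inequality with the next gradient (Euclidean case of Lemma 3.8(1)): for every x ∈ ℝⁿ, the point x⁺ := x − (1/L)∇f(x) satisfies f(x⁺) ≤ f(x) − (1/L)‖∇f(x⁺)‖². -/
open Filter
open scoped RealInnerProductSpace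

lemma aux_line {n : ℕ} {f : EuclideanSpace ℝ (Fin n) → ℝ} (hdiff : Differentiable ℝ f)
    (x v : EuclideanSpace ℝ (Fin n)) (t : ℝ) :
    HasDerivAt (fun s : ℝ => f (x + s • v)) (inner ℝ (gradient f (x + t • v)) v) t := by
  rw [inner_gradient_left]
  have h1 : HasDerivAt (fun s : ℝ => x + s • v) v t := by
    simpa using ((hasDerivAt_id t).smul_const v).const_add x
  exact (hdiff (x + t • v)).hasFDerivAt.comp_hasDerivAt t h1

lemma aux_convex {n : ℕ} {f : EuclideanSpace ℝ (Fin n) → ℝ} (hdiff : Differentiable ℝ f)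
    (hconv : ConvexOn ℝ Set.univ f) (x v : EuclideanSpace ℝ (Fin n)) :
    f x + inner ℝ (gradient f x) v ≤ f (x + v) := by
  have hc : ConvexOn ℝ Set.univ (fun s : ℝ => f (x + s • v)) := by
    refine ⟨convex_univ, fun a _ b _ p q hp hq hpq => ?_⟩
    have := hconv.2 (Set.mem_univ (x + a • v)) (Set.mem_univ (x + b • v)) hp hq hpq
    convert this using 2
    have : x = (p + q) • x := by rw [hpq, one_smul]
    nth_rewrite 1 [this]
    simp only [smul_eq_mul]
    module
  have hd := aux_line hdiff x v 0
  have := hc.le_slope_of_hasDerivAt (Set.mem_univ 0) (Set.mem_univ 1) one_pos hd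
  simp [slope_def_field] at this
  rw [inner_gradient_left]
  linarith

lemma aux_upper_s6 {n : ℕ} {f : EuclideanSpace ℝ (Fin n) → ℝ} {L : ℝ} (hdiff : Differentiable ℝ f)
    (hsmooth : ∀ y z : EuclideanSpace ℝ (Fin n),
      ‖gradient f y - gradient f z‖ ≤ L * ‖y - z‖)
    (x v : EuclideanSpace ℝ (Fin n)) :
    f (x + v) ≤ f x + inner ℝ (gradient f x) v + L / 2 * ‖v‖ ^ 2 := by
  have hd : ∀ t : ℝ, HasDerivAt (fun s : ℝ => f (x + s • v) - s * inner ℝ (gradient f x) v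
      - s ^ 2 * (L / 2 * ‖v‖ ^ 2))
      (inner ℝ (gradient f (x + t • v)) v - inner ℝ (gradient f x) v
        - 2 * t * (L / 2 * ‖v‖ ^ 2)) t := by
    intro t
    have h2 := (hasDerivAt_id t).mul_const (inner ℝ (gradient f x) v)
    have h3 := (hasDerivAt_pow 2 t).mul_const (L / 2 * ‖v‖ ^ 2)
    have := ((aux_line hdiff x v t).sub h2).sub h3
    refine HasDerivAt.congr_deriv this ?_
    norm_num
  have ha := antitoneOn_of_deriv_nonpos (convex_Icc (0:ℝ) 1)
    (fun t _ => (hd t).continuousAt.continuousWithinAt)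
    (fun t _ => (hd t).differentiableAt.differentiableWithinAt)
    (fun t ht => by
      rw [(hd t).deriv, ← inner_sub_left]
      rw [interior_Icc] at ht
      have h1 := real_inner_le_norm (gradient f (x + t • v) - gradient f x) v
      have h2 := hsmooth (x + t • v) x
      rw [add_sub_cancel_left, norm_smul, Real.norm_of_nonneg ht.1.le] at h2
      have h3 := mul_le_mul_of_nonneg_right h2 (norm_nonneg v)
      nlinarith)
  have := ha (Set.left_mem_Icc.2 zero_le_one) (Set.right_mem_Icc.2 zero_le_one) zero_le_one
  simp at this
  rw [inner_gradient_left]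
  linarith

lemma aux_key {n : ℕ} {f : EuclideanSpace ℝ (Fin n) → ℝ} {L : ℝ} (hL : 0 < L)
    (hdiff : Differentiable ℝ f) (hconv : ConvexOn ℝ Set.univ f)
    (hsmooth : ∀ y z : EuclideanSpace ℝ (Fin n),
      ‖gradient f y - gradient f z‖ ≤ L * ‖y - z‖)
    (x y : EuclideanSpace ℝ (Fin n)) :
    f y + inner ℝ (gradient f y) (x - y) + 1 / (2 * L) * ‖gradient f x - gradient f y‖ ^ 2
      ≤ f x := by
  set d := gradient f x - gradient f y with hd
  have h1 := aux_convex hdiff hconv y ((x - y) + (-(1 / L)) • d)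
  have h2 := aux_upper_s6 hdiff hsmooth x ((-(1 / L)) • d)
  have e : y + ((x - y) + (-(1 / L)) • d) = x + (-(1 / L)) • d := by abel
  rw [e, inner_add_right, inner_smul_right] at h1
  rw [inner_smul_right, norm_smul, mul_pow, Real.norm_eq_abs, sq_abs] at h2
  have h3 : inner ℝ (gradient f x) d - inner ℝ (gradient f y) d = ‖d‖ ^ 2 := by
    rw [← inner_sub_left, ← hd, real_inner_self_eq_norm_sq]
  have h4 : L / 2 * ((-(1 / L)) ^ 2 * ‖d‖ ^ 2) = 1 / (2 * L) * ‖d‖ ^ 2 := by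
    field_simp
  have h5 : 1 / (2 * L) * ‖d‖ ^ 2 = 1 / L * ‖d‖ ^ 2 / 2 := by field_simp
  rw [h4] at h2
  have h6 := congrArg (fun r => 1 / L * r) h3
  simp only [mul_sub] at h6
  linarith


/-- One-step descent inequality with the next gradient (Euclidean case of Lemma 3.8(1)):
for a convex differentiable `L`-smooth `f` and any `x`, the point
`x⁺ := x - (1/L)∇f(x)` satisfies `f(x⁺) ≤ f(x) - (1/L)‖∇f(x⁺)‖²`. -/
theorem descent_with_next_gradient {n : ℕ} (hn : 1 ≤ n)
    (f : EuclideanSpace ℝ (Fin n) → ℝ) (L : ℝ) (hL : 0 < L)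
    (hconv : ConvexOn ℝ Set.univ f) (hdiff : Differentiable ℝ f)
    (hsmooth : ∀ y z : EuclideanSpace ℝ (Fin n),
      ‖gradient f y - gradient f z‖ ≤ L * ‖y - z‖)
    (x : EuclideanSpace ℝ (Fin n)) :
    f (x - (1 / L) • gradient f x) ≤
      f x - (1 / L) * ‖gradient f (x - (1 / L) • gradient f x)‖ ^ 2 := by
  set g := gradient f x with hg
  set y := x - (1 / L) • g with hy
  set h := gradient f y with hh
  have h1 := aux_key hL hdiff hconv hsmooth x y
  have h2 := aux_key hL hdiff hconv hsmooth y x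
  have e1 : x - y = (1 / L) • g := by rw [hy]; abel
  have e2 : y - x = (-(1 / L)) • g := by rw [hy, neg_smul]; abel
  rw [e1, ← hg, ← hh, inner_smul_right, norm_sub_sq_real, real_inner_comm] at h1
  rw [e2, ← hg, ← hh, inner_smul_right, norm_sub_sq_real, real_inner_self_eq_norm_sq,
    real_inner_comm] at h2
  have h5 : 1 / (2 * L) = 1 / L / 2 := by field_simp
  rw [h5] at h1 h2
  have hp : 0 < 1 / L := by positivity
  generalize 1 / L = c at *
  have hc : inner ℝ h g = inner ℝ g h := real_inner_comm _ _
  rw [hc] at *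
  have h6 : ‖h‖ ^ 2 ≤ inner ℝ g h := by
    refine le_of_mul_le_mul_left ?_ hp
    linarith
  have h7 := real_inner_le_norm g h
  have h8 : ‖h‖ ^ 2 ≤ ‖g‖ ^ 2 := by nlinarith [sq_nonneg (‖g‖ - ‖h‖)]
  have h9 := mul_le_mul_of_nonneg_left h8 hp.le
  linarith
end

section
/- Monotone decrease of the gradient norm under a gradient step (Euclidean case of Lemma 3.8(2)): for every x ∈ ℝⁿ, the point x⁺ := x − (1/L)∇f(x) satisfies ‖∇f(x⁺)‖ ≤ ‖∇f(x)‖. -/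
open Filter
open scoped RealInnerProductSpace

lemma line_hasDerivAt {n : ℕ} (f : EuclideanSpace ℝ (Fin n) → ℝ) (hdiff : Differentiable ℝ f)
    (u v : EuclideanSpace ℝ (Fin n)) (t : ℝ) :
    HasDerivAt (fun s : ℝ => f (u + s • v)) ⟪gradient f (u + t • v), v⟫ t := by
  have h1 : HasDerivAt (fun s : ℝ => u + s • v) v t := by
    simpa using ((hasDerivAt_id t).smul_const v).const_add u
  have h2 := (hdiff (u + t • v)).hasFDerivAt.comp_hasDerivAt t h1
  rw [inner_gradient_left]
  exact h2

lemma first_order {n : ℕ} (f : EuclideanSpace ℝ (Fin n) → ℝ) (hdiff : Differentiable ℝ f)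
    (hconv : ConvexOn ℝ Set.univ f) (u v : EuclideanSpace ℝ (Fin n)) :
    f u + ⟪gradient f u, v⟫ ≤ f (u + v) := by
  have hc : ConvexOn ℝ Set.univ (fun s : ℝ => f (u + s • v)) := by
    refine ⟨convex_univ, fun a _ b _ p q hp hq hpq => ?_⟩
    have := hconv.2 (Set.mem_univ (u + a • v)) (Set.mem_univ (u + b • v)) hp hq hpq
    convert this using 2
    have : u = p • u + q • u := by rw [← add_smul, hpq, one_smul]
    nth_rewrite 1 [this]
    simp only [smul_eq_mul]
    module
  have hd := line_hasDerivAt f hdiff u v 0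
  have := hc.le_slope_of_hasDerivAt (Set.mem_univ 0) (Set.mem_univ 1) one_pos hd
  simp [slope_def_field] at this
  rw [inner_gradient_left]
  linarith

lemma descent {n : ℕ} (f : EuclideanSpace ℝ (Fin n) → ℝ) (hdiff : Differentiable ℝ f)
    (L : ℝ) (hsmooth : ∀ y z : EuclideanSpace ℝ (Fin n),
      ‖gradient f y - gradient f z‖ ≤ L * ‖y - z‖) (u v : EuclideanSpace ℝ (Fin n)) :
    f (u + v) ≤ f u + ⟪gradient f u, v⟫ + L / 2 * ‖v‖ ^ 2 := by
  have hd : ∀ t : ℝ, HasDerivAt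
      (fun s : ℝ => f (u + s • v) - s * ⟪gradient f u, v⟫ - L / 2 * ‖v‖ ^ 2 * s ^ 2)
      (⟪gradient f (u + t • v), v⟫ - ⟪gradient f u, v⟫ - L * ‖v‖ ^ 2 * t) t := by
    intro t
    have := ((line_hasDerivAt f hdiff u v t).sub
      ((hasDerivAt_id t).mul_const ⟪gradient f u, v⟫)).sub
      ((hasDerivAt_pow 2 t).const_mul (L / 2 * ‖v‖ ^ 2))
    refine this.congr_deriv ?_
    norm_num
    ring
  have ha := antitoneOn_of_deriv_nonpos (convex_Icc (0 : ℝ) 1)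
    (fun t _ => (hd t).continuousAt.continuousWithinAt)
    (fun t _ => (hd t).differentiableAt.differentiableWithinAt) (by
      intro t ht
      rw [interior_Icc] at ht
      rw [(hd t).deriv, ← inner_sub_left]
      have h1 := real_inner_le_norm (gradient f (u + t • v) - gradient f u) v
      have h2 := hsmooth (u + t • v) u
      rw [add_sub_cancel_left, norm_smul, Real.norm_of_nonneg ht.1.le] at h2
      have h3 := mul_le_mul_of_nonneg_right h2 (norm_nonneg v)
      nlinarith)
  have := ha (Set.left_mem_Icc.2 zero_le_one) (Set.right_mem_Icc.2 zero_le_one) zero_le_one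
  simp at this
  rw [inner_gradient_left]
  linarith

lemma half_coco {n : ℕ} (f : EuclideanSpace ℝ (Fin n) → ℝ) (hdiff : Differentiable ℝ f)
    (hconv : ConvexOn ℝ Set.univ f) (L : ℝ) (hL : 0 < L)
    (hsmooth : ∀ y z : EuclideanSpace ℝ (Fin n),
      ‖gradient f y - gradient f z‖ ≤ L * ‖y - z‖) (y z : EuclideanSpace ℝ (Fin n)) :
    f z + ⟪gradient f z, y - z⟫ + 1 / (2 * L) * ‖gradient f y - gradient f z‖ ^ 2 ≤ f y := by
  set d := gradient f y - gradient f z with hdd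
  have h1 := descent f hdiff L hsmooth y (-((1 / L) • d))
  have h2 := first_order f hdiff hconv z ((y - z) + -((1 / L) • d))
  rw [show z + ((y - z) + -((1 / L) • d)) = y + -((1 / L) • d) by abel] at h2
  rw [inner_add_right, inner_neg_right, inner_smul_right] at h2
  rw [inner_neg_right, inner_smul_right, norm_neg, norm_smul, mul_pow,
    Real.norm_of_nonneg (by positivity)] at h1
  have h3 : ⟪gradient f y, d⟫ - ⟪gradient f z, d⟫ = ‖d‖ ^ 2 := by
    rw [← inner_sub_left, ← hdd, real_inner_self_eq_norm_sq]
  have h4 : L / 2 * ((1 / L) ^ 2 * ‖d‖ ^ 2) = 1 / (2 * L) * ‖d‖ ^ 2 := by field_simp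
  have h5 : 1 / L * ⟪gradient f y, d⟫ - 1 / L * ⟪gradient f z, d⟫
      = 2 * (1 / (2 * L) * ‖d‖ ^ 2) := by
    rw [← mul_sub, h3]; field_simp
  linarith

/-- Monotone decrease of the gradient norm under a gradient step (Euclidean case of
Lemma 3.8(2)): for a convex differentiable `L`-smooth `f` and any `x`, the point
`x⁺ := x - (1/L)∇f(x)` satisfies `‖∇f(x⁺)‖ ≤ ‖∇f(x)‖`. -/
theorem gradient_norm_decrease_step {n : ℕ} (hn : 1 ≤ n)
    (f : EuclideanSpace ℝ (Fin n) → ℝ) (L : ℝ) (hL : 0 < L)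
    (hconv : ConvexOn ℝ Set.univ f) (hdiff : Differentiable ℝ f)
    (hsmooth : ∀ y z : EuclideanSpace ℝ (Fin n),
      ‖gradient f y - gradient f z‖ ≤ L * ‖y - z‖)
    (x : EuclideanSpace ℝ (Fin n)) :
    ‖gradient f (x - (1 / L) • gradient f x)‖ ≤ ‖gradient f x‖ := by
  have h1 := half_coco f hdiff hconv L hL hsmooth x (x - (1 / L) • gradient f x)
  have h2 := half_coco f hdiff hconv L hL hsmooth (x - (1 / L) • gradient f x) x
  rw [sub_sub_cancel, inner_smul_right] at h1
  rw [sub_sub_cancel_left, inner_neg_right, inner_smul_right, norm_sub_rev] at h2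
  set a := gradient f x
  set b := gradient f (x - (1 / L) • a)
  have h3 : 1 / (2 * L) = 1 / L / 2 := by field_simp
  rw [h3] at h1 h2
  have hL' : 0 < 1 / L := by positivity
  have h4 : 1 / L * (⟪b, a⟫ - ⟪a, a⟫ + ‖a - b‖ ^ 2) ≤ 1 / L * 0 := by linarith
  have h5 := le_of_mul_le_mul_left h4 hL'
  rw [norm_sub_sq_real, real_inner_self_eq_norm_sq, real_inner_comm] at h5
  have h6 := real_inner_le_norm a b
  by_contra! h
  nlinarith [norm_nonneg a, norm_nonneg b]
end

section
/- Directional convergence of gradient descent to the minimizer of the recession function (Euclidean case of Theorem 3.7(2)): suppose κ* := inf_{y ∈ ℝⁿ} ‖∇f(y)‖ > 0 and let (x_i) be the gradient-descent sequence with step size 1/L from any initial point x₀. Then ‖x_i‖ → ∞ as i → ∞, and x_i/‖x_i‖ converges to a unit vector ξ* satisfying f^∞(ξ*) = −κ*; moreover ξ* is the unique unit vector u with f^∞(u) ≤ −κ*. -/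
open Filter
open scoped RealInnerProductSpace

section GDHelpers

variable {E : Type*} [NormedAddCommGroup E] [InnerProductSpace ℝ E] [CompleteSpace E]

lemma gd_line_deriv (f : E → ℝ) (hdiff : Differentiable ℝ f) (y d : E) (t : ℝ) :
    HasDerivAt (fun t : ℝ => f (y + t • d)) (inner ℝ (gradient f (y + t • d)) d) t := by
  have h1 : HasFDerivAt f _ (y + t • d) := (hdiff (y + t • d)).hasGradientAt.hasFDerivAt
  have h2 : HasDerivAt (fun t : ℝ => y + t • d) d t := by
    simpa using ((hasDerivAt_id t).smul_const d).const_add y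
  exact h1.comp_hasDerivAt t h2

lemma gd_first_order (f : E → ℝ) (hconv : ConvexOn ℝ Set.univ f) (hdiff : Differentiable ℝ f)
    (y z : E) : f z + inner ℝ (gradient f z) (y - z) ≤ f y := by
  have hc : ConvexOn ℝ Set.univ (fun t : ℝ => f (z + t • (y - z))) := by
    have h := hconv.comp_affineMap (AffineMap.lineMap z y : ℝ →ᵃ[ℝ] E)
    have e : (f ∘ (AffineMap.lineMap z y : ℝ →ᵃ[ℝ] E)) = fun t : ℝ => f (z + t • (y - z)) := by
      funext t
      simp [AffineMap.lineMap_apply, add_comm]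
    rw [e] at h
    simpa using h
  have hd := gd_line_deriv f hdiff z (y - z) 0
  have h := hc.le_slope_of_hasDerivAt (Set.mem_univ 0) (Set.mem_univ 1) one_pos hd
  simp only [slope_def_field, zero_smul, add_zero, one_smul, add_sub_cancel, sub_zero,
    div_one] at h
  linarith

lemma gd_descent (f : E → ℝ) (hdiff : Differentiable ℝ f) (L : ℝ)
    (hsmooth : ∀ y z : E, ‖gradient f y - gradient f z‖ ≤ L * ‖y - z‖) (y d : E) :
    f (y + d) ≤ f y + inner ℝ (gradient f y) d + L / 2 * ‖d‖ ^ 2 := by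
  have hD : ∀ t : ℝ, HasDerivAt (fun t : ℝ => f (y + t • d) - t * inner ℝ (gradient f y) d
      - L / 2 * ‖d‖ ^ 2 * t ^ 2)
      (inner ℝ (gradient f (y + t • d)) d - inner ℝ (gradient f y) d - L * ‖d‖ ^ 2 * t) t := by
    intro t
    have h := ((gd_line_deriv f hdiff y d t).sub
      ((hasDerivAt_id t).mul_const (inner ℝ (gradient f y) d))).sub
      ((hasDerivAt_pow 2 t).const_mul (L / 2 * ‖d‖ ^ 2))
    refine h.congr_deriv ?_
    simp
    ring
  have hA : AntitoneOn (fun t : ℝ => f (y + t • d) - t * inner ℝ (gradient f y) d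
      - L / 2 * ‖d‖ ^ 2 * t ^ 2) (Set.Ici 0) := by
    apply antitoneOn_of_deriv_nonpos (convex_Ici 0)
    · exact fun t _ => (hD t).continuousAt.continuousWithinAt
    · exact fun t _ => (hD t).differentiableAt.differentiableWithinAt
    · intro t ht
      rw [interior_Ici] at ht
      have ht : 0 < t := ht
      rw [(hD t).deriv, ← inner_sub_left]
      have h1 := real_inner_le_norm (gradient f (y + t • d) - gradient f y) d
      have h2 := hsmooth (y + t • d) y
      rw [add_sub_cancel_left, norm_smul, Real.norm_eq_abs, abs_of_pos ht] at h2
      have h3 := mul_le_mul_of_nonneg_right h2 (norm_nonneg d)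
      nlinarith
  have h := hA (Set.mem_Ici.2 le_rfl) (Set.mem_Ici.2 zero_le_one) zero_le_one
  simp only [zero_smul, add_zero, one_smul, one_mul, zero_mul, sub_zero, one_pow, mul_one,
    ne_eq, OfNat.ofNat_ne_zero, not_false_eq_true, zero_pow, mul_zero] at h
  linarith

lemma gd_cocoercive (f : E → ℝ) (hconv : ConvexOn ℝ Set.univ f) (hdiff : Differentiable ℝ f)
    (L : ℝ) (hL : 0 < L)
    (hsmooth : ∀ y z : E, ‖gradient f y - gradient f z‖ ≤ L * ‖y - z‖) (y z : E) :
    f z + inner ℝ (gradient f z) (y - z) + 1 / (2 * L) * ‖gradient f y - gradient f z‖ ^ 2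
      ≤ f y := by
  set w := gradient f y - gradient f z with hw
  have h1 := gd_descent f hdiff L hsmooth y (-(1 / L) • w)
  have h2 := gd_first_order f hconv hdiff (y + -(1 / L) • w) z
  have e : y + -(1 / L) • w - z = (y - z) + -(1 / L) • w := by abel
  rw [e, inner_add_right, inner_smul_right] at h2
  rw [inner_smul_right, norm_smul, mul_pow, Real.norm_eq_abs, sq_abs] at h1
  have h3 : inner ℝ (gradient f y) w - inner ℝ (gradient f z) w = ‖w‖ ^ 2 := by
    rw [← inner_sub_left, ← hw, real_inner_self_eq_norm_sq]
  have h4 : L / 2 * ((-(1 / L)) ^ 2 * ‖w‖ ^ 2) = 1 / (2 * L) * ‖w‖ ^ 2 := by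
    field_simp
  have h5 : (1 / L) * (inner ℝ (gradient f y) w - inner ℝ (gradient f z) w)
      = 2 * (1 / (2 * L) * ‖w‖ ^ 2) := by
    rw [h3]; field_simp
  rw [h4] at h1
  linarith

lemma gd_firm (f : E → ℝ) (hconv : ConvexOn ℝ Set.univ f) (hdiff : Differentiable ℝ f)
    (L : ℝ) (hL : 0 < L)
    (hsmooth : ∀ y z : E, ‖gradient f y - gradient f z‖ ≤ L * ‖y - z‖) (y z : E) :
    ‖(y - (1 / L) • gradient f y) - (z - (1 / L) • gradient f z)‖ ^ 2
      + (1 / L) ^ 2 * ‖gradient f y - gradient f z‖ ^ 2 ≤ ‖y - z‖ ^ 2 := by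
  have h1 := gd_cocoercive f hconv hdiff L hL hsmooth y z
  have h2 := gd_cocoercive f hconv hdiff L hL hsmooth z y
  rw [norm_sub_rev (gradient f z)] at h2
  have e : (y - (1 / L) • gradient f y) - (z - (1 / L) • gradient f z)
      = (y - z) - (1 / L) • (gradient f y - gradient f z) := by
    rw [smul_sub]; abel
  have e2 : inner ℝ (gradient f y) (z - y) = - inner ℝ (gradient f y) (y - z) := by
    rw [← inner_neg_right, neg_sub]
  rw [e, @norm_sub_sq_real, inner_smul_right, norm_smul, mul_pow, Real.norm_eq_abs, sq_abs,
    real_inner_comm, inner_sub_left]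
  rw [e2] at h2
  have h3 : (1 / L) * ‖gradient f y - gradient f z‖ ^ 2 ≤
      inner ℝ (gradient f y) (y - z) - inner ℝ (gradient f z) (y - z) := by
    have : (1 / L) * ‖gradient f y - gradient f z‖ ^ 2
      = 2 * (1 / (2 * L) * ‖gradient f y - gradient f z‖ ^ 2) := by field_simp
    linarith
  have h4 := mul_le_mul_of_nonneg_left h3 (one_div_pos.2 hL).le
  nlinarith

lemma gd_antitone (f : E → ℝ) (hconv : ConvexOn ℝ Set.univ f) (hdiff : Differentiable ℝ f)
    (L : ℝ) (hL : 0 < L)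
    (hsmooth : ∀ y z : E, ‖gradient f y - gradient f z‖ ≤ L * ‖y - z‖)
    (x : ℕ → E) (hrec : ∀ i : ℕ, x (i + 1) = x i - (1 / L) • gradient f (x i)) :
    Antitone (fun i => ‖gradient f (x i)‖) := by
  apply antitone_nat_of_succ_le
  intro i
  have h := gd_firm f hconv hdiff L hL hsmooth (x (i + 1)) (x i)
  rw [← hrec, ← hrec] at h
  have e1 : x (i + 1) - x i = -((1 / L) • gradient f (x i)) := by rw [hrec i]; abel
  have e2 : x (i + 1 + 1) - x (i + 1) = -((1 / L) • gradient f (x (i + 1))) := by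
    rw [hrec (i + 1)]; abel
  rw [e1, e2, norm_neg, norm_neg, norm_smul, norm_smul, mul_pow, mul_pow, Real.norm_eq_abs,
    sq_abs] at h
  have hp : 0 < (1 / L) ^ 2 := by positivity
  have h2 : ‖gradient f (x (i + 1))‖ ^ 2 ≤ ‖gradient f (x i)‖ ^ 2 := by
    apply le_of_mul_le_mul_left _ hp
    nlinarith [mul_nonneg hp.le (sq_nonneg ‖gradient f (x (i + 1)) - gradient f (x i)‖)]
  exact (sq_le_sq₀ (norm_nonneg _) (norm_nonneg _)).1 h2

lemma gd_norm_tendsto (f : E → ℝ) (hconv : ConvexOn ℝ Set.univ f) (hdiff : Differentiable ℝ f)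
    (L : ℝ) (hL : 0 < L)
    (hsmooth : ∀ y z : E, ‖gradient f y - gradient f z‖ ≤ L * ‖y - z‖)
    (x : ℕ → E) (hrec : ∀ i : ℕ, x (i + 1) = x i - (1 / L) • gradient f (x i)) :
    Tendsto (fun i => ‖gradient f (x i)‖) atTop (nhds (⨅ y, ‖gradient f y‖)) := by
  have hbdd : BddBelow (Set.range fun y => ‖gradient f y‖) :=
    ⟨0, by rintro _ ⟨y, rfl⟩; exact norm_nonneg _⟩
  have hanti := gd_antitone f hconv hdiff L hL hsmooth x hrec
  have hp : 0 < (1 / L) ^ 2 := by positivity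
  have key : ∀ y0 : E, ∀ ε > 0, ∃ k, ‖gradient f (x k)‖ < ‖gradient f y0‖ + ε := by
    intro y0 ε hε
    let y : ℕ → E := fun k => Nat.rec y0 (fun _ z => z - (1 / L) • gradient f z) k
    have hy : ∀ i, y (i + 1) = y i - (1 / L) • gradient f (y i) := fun i => rfl
    have hya := gd_antitone f hconv hdiff L hL hsmooth y hy
    by_contra hcon
    push Not at hcon
    have hk : ∀ k, ε ≤ ‖gradient f (x k) - gradient f (y k)‖ := by
      intro k
      have h1 := hcon k
      have h2 : ‖gradient f (y k)‖ ≤ ‖gradient f y0‖ := hya (Nat.zero_le k)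
      have h3 := norm_sub_norm_le (gradient f (x k)) (gradient f (y k))
      linarith
    have hind : ∀ k : ℕ, ‖x k - y k‖ ^ 2 + k * ((1 / L) ^ 2 * ε ^ 2) ≤ ‖x 0 - y 0‖ ^ 2 := by
      intro k
      induction k with
      | zero => simp
      | succ k ih =>
        have h := gd_firm f hconv hdiff L hL hsmooth (x k) (y k)
        rw [← hrec, ← hy] at h
        have h1 : ε ^ 2 ≤ ‖gradient f (x k) - gradient f (y k)‖ ^ 2 :=
          pow_le_pow_left₀ hε.le (hk k) 2
        have h2 := mul_le_mul_of_nonneg_left h1 hp.le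
        push_cast
        linarith
    obtain ⟨k, hk⟩ := exists_nat_gt (‖x 0 - y 0‖ ^ 2 / ((1 / L) ^ 2 * ε ^ 2))
    rw [div_lt_iff₀ (by positivity)] at hk
    have := hind k
    nlinarith [sq_nonneg ‖x k - y k‖]
  rw [Metric.tendsto_atTop]
  intro ε hε
  obtain ⟨y0, hy0⟩ := exists_lt_of_ciInf_lt
    (show (⨅ y, ‖gradient f y‖) < (⨅ y, ‖gradient f y‖) + ε / 2 by linarith)
  obtain ⟨k, hk⟩ := key y0 (ε / 2) (by linarith)
  refine ⟨k, fun m hm => ?_⟩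
  have h1 : ‖gradient f (x m)‖ ≤ ‖gradient f (x k)‖ := hanti hm
  have h2 := ciInf_le hbdd (x m)
  rw [Real.dist_eq, abs_of_nonneg (by linarith)]
  linarith

/-- The rescaled iterates converge to the minimal-norm limit gradient `q`. -/
lemma gd_main (f : E → ℝ) (hconv : ConvexOn ℝ Set.univ f) (hdiff : Differentiable ℝ f)
    (L : ℝ) (hL : 0 < L)
    (hsmooth : ∀ y z : E, ‖gradient f y - gradient f z‖ ≤ L * ‖y - z‖)
    (κ : ℝ) (hκ : 0 < κ) (hκe : κ = ⨅ y, ‖gradient f y‖)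
    (x : ℕ → E) (hrec : ∀ i : ℕ, x (i + 1) = x i - (1 / L) • gradient f (x i)) :
    ∃ q : E, ‖q‖ = κ ∧ (∀ y, κ ^ 2 ≤ inner ℝ (gradient f y) q) ∧
      Tendsto (fun k => gradient f (x k)) atTop (nhds q) ∧
      Tendsto (fun m : ℕ => -((L * (m : ℝ)⁻¹) • x m)) atTop (nhds q) := by
  have hbdd : BddBelow (Set.range fun y => ‖gradient f y‖) :=
    ⟨0, by rintro _ ⟨y, rfl⟩; exact norm_nonneg _⟩
  have hκle : ∀ y, κ ≤ ‖gradient f y‖ := fun y => hκe ▸ ciInf_le hbdd y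
  have hg := gd_norm_tendsto f hconv hdiff L hL hsmooth x hrec
  rw [← hκe] at hg
  -- function decrease
  have hdec : ∀ m : ℕ, f (x m) ≤ f (x 0) - m * (κ ^ 2 / L) := by
    intro m
    induction m with
    | zero => simp
    | succ k ih =>
      have h := gd_cocoercive f hconv hdiff L hL hsmooth (x k) (x (k + 1))
      have e : x k - x (k + 1) = (1 / L) • gradient f (x k) := by rw [hrec k]; abel
      rw [e, inner_smul_right, @norm_sub_sq_real, real_inner_comm] at h
      have h1 := pow_le_pow_left₀ hκ.le (hκle (x k)) 2
      have h2 := pow_le_pow_left₀ hκ.le (hκle (x (k + 1))) 2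
      have e2 : 1 / L * inner ℝ (gradient f (x k)) (gradient f (x (k + 1))) +
          1 / (2 * L) * (‖gradient f (x k)‖ ^ 2
            - 2 * inner ℝ (gradient f (x k)) (gradient f (x (k + 1)))
            + ‖gradient f (x (k + 1))‖ ^ 2) = (‖gradient f (x k)‖ ^ 2
            + ‖gradient f (x (k + 1))‖ ^ 2) / 2 / L := by
        field_simp
        ring
      have h3 : κ ^ 2 / L ≤ (‖gradient f (x k)‖ ^ 2
            + ‖gradient f (x (k + 1))‖ ^ 2) / 2 / L := by
        gcongr
        linarith
      push_cast
      linarith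
  have hnorm : ∀ m : ℕ, L * ‖x m‖ ≤ L * ‖x 0‖ +
      ∑ i ∈ Finset.range m, ‖gradient f (x i)‖ := by
    intro m
    induction m with
    | zero => simp
    | succ k ih =>
      rw [Finset.sum_range_succ, hrec k]
      have h := norm_sub_le (x k) ((1 / L) • gradient f (x k))
      rw [norm_smul, Real.norm_eq_abs, abs_of_pos (one_div_pos.2 hL)] at h
      have h2 := mul_le_mul_of_nonneg_left h hL.le
      have e : L * (‖x k‖ + 1 / L * ‖gradient f (x k)‖) = L * ‖x k‖ + ‖gradient f (x k)‖ := by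
        field_simp
      linarith
  set v : ℕ → E := fun m => -((L * (m : ℝ)⁻¹) • x m) with hv
  have hinv : Tendsto (fun m : ℕ => (m : ℝ)⁻¹) atTop (nhds 0) :=
    tendsto_inv_atTop_nhds_zero_nat
  set a : ℕ → ℝ := fun m => (L * ‖x 0‖) * (m : ℝ)⁻¹ +
    (m : ℝ)⁻¹ * ∑ i ∈ Finset.range m, ‖gradient f (x i)‖ with ha
  have ha_lim : Tendsto a atTop (nhds κ) := by
    simpa using (hinv.const_mul (L * ‖x 0‖)).add hg.cesaro
  have hva : ∀ m, ‖v m‖ ≤ a m := by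
    intro m
    have hm : (0 : ℝ) ≤ (m : ℝ)⁻¹ := by positivity
    simp only [hv, ha, norm_neg, norm_smul, Real.norm_eq_abs]
    rw [abs_of_nonneg (by positivity)]
    have := mul_le_mul_of_nonneg_left (hnorm m) hm
    linarith
  have hvin : ∀ y, ∀ m : ℕ, 1 ≤ m → κ ^ 2 - (L * (f (x 0) - f y + inner ℝ (gradient f y) y))
      * (m : ℝ)⁻¹ ≤ inner ℝ (gradient f y) (v m) := by
    intro y m hm
    have hm' : (0 : ℝ) < m := by exact_mod_cast hm
    have h1 := gd_first_order f hconv hdiff (x m) y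
    rw [inner_sub_right] at h1
    have h2 := hdec m
    simp only [hv, inner_neg_right, inner_smul_right]
    have h3 : inner ℝ (gradient f y) (x m) ≤
      (f (x 0) - f y + inner ℝ (gradient f y) y) - m * (κ ^ 2 / L) := by linarith
    have h4 := mul_le_mul_of_nonneg_left h3 (show 0 ≤ L * (m : ℝ)⁻¹ by positivity)
    have e : L * (m : ℝ)⁻¹ * (m * (κ ^ 2 / L)) = κ ^ 2 := by field_simp
    rw [mul_sub, e] at h4
    linarith
  -- distance bound
  have hdist : ∀ y, ∀ ε > 0, ‖gradient f y‖ ^ 2 - κ ^ 2 < ε ^ 2 →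
      ∀ᶠ m in atTop, ‖gradient f y - v m‖ < ε := by
    intro y ε hε hlt
    have hl : Tendsto (fun m : ℕ => ‖gradient f y‖ ^ 2 + a m ^ 2 - 2 * (κ ^ 2 -
        (L * (f (x 0) - f y + inner ℝ (gradient f y) y)) * (m : ℝ)⁻¹)) atTop
        (nhds (‖gradient f y‖ ^ 2 + κ ^ 2 - 2 * (κ ^ 2 -
        (L * (f (x 0) - f y + inner ℝ (gradient f y) y)) * 0))) :=
      ((ha_lim.pow 2).const_add _).sub ((((hinv.const_mul _).const_sub _)).const_mul 2)
    have hlt' : ‖gradient f y‖ ^ 2 + κ ^ 2 - 2 * (κ ^ 2 -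
        (L * (f (x 0) - f y + inner ℝ (gradient f y) y)) * 0) < ε ^ 2 := by linarith
    filter_upwards [hl.eventually_lt_const hlt', eventually_ge_atTop 1] with m h1 hm
    have h2 := hvin y m hm
    have h3 := pow_le_pow_left₀ (norm_nonneg _) (hva m) 2
    have h4 := @norm_sub_sq_real E _ _ (gradient f y) (v m)
    exact lt_of_pow_lt_pow_left₀ 2 hε.le (by linarith)
  have hg2 : Tendsto (fun k => ‖gradient f (x k)‖ ^ 2 - κ ^ 2) atTop (nhds 0) := by
    have h := (hg.pow 2).sub_const (κ ^ 2)
    rwa [sub_self] at h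
  have hcau : CauchySeq v := by
    rw [Metric.cauchySeq_iff']
    intro ε hε
    obtain ⟨k, hk⟩ := (hg2.eventually_lt_const (show (0 : ℝ) < (ε / 2) ^ 2 by positivity)).exists
    obtain ⟨N, hN⟩ := eventually_atTop.1 (hdist (x k) (ε / 2) (by linarith) hk)
    refine ⟨N, fun m hm => ?_⟩
    have h1 := hN m hm
    have h2 := hN N le_rfl
    rw [← dist_eq_norm] at h1 h2
    have := dist_triangle_left (v m) (v N) (gradient f (x k))
    linarith
  obtain ⟨q, hq⟩ := cauchySeq_tendsto_of_complete hcau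
  have hq1 : ‖q‖ ≤ κ := le_of_tendsto_of_tendsto' hq.norm ha_lim hva
  have hq2 : ∀ y, κ ^ 2 ≤ inner ℝ (gradient f y) q := by
    intro y
    have h1 : Tendsto (fun m => inner ℝ (gradient f y) (v m)) atTop
      (nhds (inner ℝ (gradient f y) q)) := tendsto_const_nhds.inner hq
    have h2 := (hinv.const_mul (L * (f (x 0) - f y + inner ℝ (gradient f y) y))).const_sub (κ ^ 2)
    rw [mul_zero, sub_zero] at h2
    refine le_of_tendsto_of_tendsto h2 h1 ?_
    filter_upwards [eventually_ge_atTop 1] with m hm using hvin y m hm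
  have hgq : Tendsto (fun k => gradient f (x k)) atTop (nhds q) := by
    rw [tendsto_iff_norm_sub_tendsto_zero]
    have h0 : Tendsto (fun k => Real.sqrt (‖gradient f (x k)‖ ^ 2 - κ ^ 2)) atTop (nhds 0) := by
      simpa using hg2.sqrt
    refine squeeze_zero (fun k => norm_nonneg _) (fun k => ?_) h0
    apply Real.le_sqrt_of_sq_le
    have h4 := @norm_sub_sq_real E _ _ (gradient f (x k)) q
    have h3 := pow_le_pow_left₀ (norm_nonneg _) hq1 2
    linarith [hq2 (x k)]
  exact ⟨q, tendsto_nhds_unique hgq.norm hg, hq2, hgq, hq⟩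

end GDHelpers

lemma gd_recession_lower {n : ℕ} (f : EuclideanSpace ℝ (Fin n) → ℝ)
    (hconv : ConvexOn ℝ Set.univ f) (hdiff : Differentiable ℝ f)
    (u : EuclideanSpace ℝ (Fin n)) (c : ℝ) (h : recessionFn f u ≤ (c : EReal))
    (y : EuclideanSpace ℝ (Fin n)) : inner ℝ (gradient f y) u ≤ c := by
  by_contra hcon
  push Not at hcon
  have hs : ∀ s : ℝ, 0 < s →
      s * (inner ℝ (gradient f y) u - c) ≤ f 0 - f y + inner ℝ (gradient f y) y := by
    intro s hs
    have h1 : (((f (s • u) - f 0) / s : ℝ) : EReal) ≤ c :=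
      le_trans (le_iSup₂ (f := fun (s : ℝ) (_ : 0 < s) =>
        (((f (s • u) - f 0) / s : ℝ) : EReal)) s hs) h
    rw [EReal.coe_le_coe_iff, div_le_iff₀ hs] at h1
    have h2 := gd_first_order f hconv hdiff (s • u) y
    rw [inner_sub_right, inner_smul_right] at h2
    linarith
  have hd : 0 < inner ℝ (gradient f y) u - c := by linarith
  have h3 := hs ((|f 0 - f y + inner ℝ (gradient f y) y| + 1) /
    (inner ℝ (gradient f y) u - c)) (by positivity)
  rw [div_mul_cancel₀ _ hd.ne'] at h3
  linarith [le_abs_self (f 0 - f y + inner ℝ (gradient f y) y)]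

/-- Directional convergence of gradient descent to the minimizer of the recession
function (Euclidean case of Theorem 3.7(2)): if `κ* := inf_y ‖∇f(y)‖ > 0` and `(x_i)`
is the gradient-descent sequence with step size `1/L`, then `‖x_i‖ → ∞` and
`x_i/‖x_i‖` converges to a unit vector `ξ*` with `f^∞(ξ*) = -κ*`, which is the
unique unit vector `u` with `f^∞(u) ≤ -κ*`. -/
theorem gradient_descent_directional_convergence {n : ℕ} (hn : 1 ≤ n)
    (f : EuclideanSpace ℝ (Fin n) → ℝ) (L : ℝ) (hL : 0 < L)
    (hconv : ConvexOn ℝ Set.univ f) (hdiff : Differentiable ℝ f)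
    (hsmooth : ∀ y z : EuclideanSpace ℝ (Fin n),
      ‖gradient f y - gradient f z‖ ≤ L * ‖y - z‖)
    (hκ : 0 < ⨅ y, ‖gradient f y‖)
    (x : ℕ → EuclideanSpace ℝ (Fin n))
    (hrec : ∀ i : ℕ, x (i + 1) = x i - (1 / L) • gradient f (x i)) :
    Tendsto (fun i => ‖x i‖) atTop atTop ∧
    ∃ ξ : EuclideanSpace ℝ (Fin n), ‖ξ‖ = 1 ∧
      Tendsto (fun i => ‖x i‖⁻¹ • x i) atTop (nhds ξ) ∧
      recessionFn f ξ = ((-(⨅ y, ‖gradient f y‖) : ℝ) : EReal) ∧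
      ∀ u : EuclideanSpace ℝ (Fin n), ‖u‖ = 1 →
        recessionFn f u ≤ ((-(⨅ y, ‖gradient f y‖) : ℝ) : EReal) → u = ξ := by
  obtain ⟨q, hqn, hq, hgq, hvq⟩ := gd_main f hconv hdiff L hL hsmooth _ hκ rfl x hrec
  set κ := ⨅ y, ‖gradient f y‖ with hκe
  have hxn : ∀ m : ℕ, 1 ≤ m → ‖x m‖ = (m : ℝ) * (L⁻¹ * ‖-((L * (m : ℝ)⁻¹) • x m)‖) := by
    intro m hm
    have hm' : (0 : ℝ) < m := by exact_mod_cast hm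
    rw [norm_neg, norm_smul, Real.norm_eq_abs, abs_of_pos (by positivity)]
    field_simp
  have hξn : ‖-(κ⁻¹ • q)‖ = 1 := by
    rw [norm_neg, norm_smul, hqn, Real.norm_eq_abs, abs_of_pos (inv_pos.2 hκ)]
    exact inv_mul_cancel₀ hκ.ne'
  refine ⟨?_, -(κ⁻¹ • q), hξn, ?_, ?_, ?_⟩
  · have h1 : Tendsto (fun m : ℕ => L⁻¹ * ‖-((L * (m : ℝ)⁻¹) • x m)‖) atTop
        (nhds (L⁻¹ * κ)) := by
      rw [← hqn]
      exact hvq.norm.const_mul _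
    have h2 := (tendsto_natCast_atTop_atTop (R := ℝ)).atTop_mul_pos (by positivity) h1
    refine h2.congr' ?_
    filter_upwards [eventually_ge_atTop 1] with m hm using (hxn m hm).symm
  · have h1 : Tendsto (fun m : ℕ => -(‖-((L * (m : ℝ)⁻¹) • x m)‖⁻¹ •
        -((L * (m : ℝ)⁻¹) • x m))) atTop (nhds (-(κ⁻¹ • q))) := by
      have h := ((hvq.norm.inv₀ (by rw [hqn]; exact hκ.ne')).smul hvq).neg
      rwa [hqn] at h
    refine h1.congr' ?_
    filter_upwards [eventually_ge_atTop 1] with m hm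
    have hm' : (0 : ℝ) < m := by exact_mod_cast hm
    have hp : 0 < L * (m : ℝ)⁻¹ := by positivity
    rw [norm_neg, norm_smul, Real.norm_eq_abs, abs_of_pos hp, smul_neg, neg_neg, smul_smul,
      mul_inv_rev, mul_assoc, inv_mul_cancel₀ hp.ne', mul_one]
  · apply le_antisymm
    · refine iSup₂_le fun s hs => ?_
      rw [EReal.coe_le_coe_iff, div_le_iff₀ hs]
      have h1 := gd_first_order f hconv hdiff 0 (s • -(κ⁻¹ • q))
      rw [zero_sub, inner_neg_right, inner_smul_right, inner_neg_right, inner_smul_right] at h1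
      have h2 := mul_le_mul_of_nonneg_left (hq (s • -(κ⁻¹ • q))) (inv_pos.2 hκ).le
      have e : κ⁻¹ * κ ^ 2 = κ := by field_simp
      rw [e] at h2
      have h3 := mul_le_mul_of_nonneg_left h2 hs.le
      linarith
    · by_contra hcon
      rw [not_le] at hcon
      obtain ⟨c, hc1, hc2⟩ := EReal.lt_iff_exists_real_btwn.1 hcon
      rw [EReal.coe_lt_coe_iff] at hc2
      have hlt : κ < -c := by linarith
      obtain ⟨y, hy⟩ := exists_lt_of_ciInf_lt hlt
      have h1 := gd_recession_lower f hconv hdiff _ c hc1.le y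
      have h2 := abs_real_inner_le_norm (gradient f y) (-(κ⁻¹ • q))
      rw [hξn, mul_one] at h2
      linarith [neg_abs_le (inner ℝ (gradient f y) (-(κ⁻¹ • q)))]
  · intro u hu hru
    have h1 := gd_recession_lower f hconv hdiff u _ hru
    have h2 : inner ℝ q u ≤ -κ :=
      le_of_tendsto' (hgq.inner tendsto_const_nhds) (fun k => h1 (x k))
    have h3 : inner ℝ u (-(κ⁻¹ • q)) = 1 := by
      apply le_antisymm
      · have := real_inner_le_norm u (-(κ⁻¹ • q))
        rwa [hu, hξn, mul_one] at this
      · rw [inner_neg_right, inner_smul_right, real_inner_comm]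
        have h4 := mul_le_mul_of_nonneg_left h2 (inv_pos.2 hκ).le
        rw [mul_neg, inv_mul_cancel₀ hκ.ne'] at h4
        linarith
    exact (inner_eq_one_iff_of_norm_eq_one hu hξn).1 h3
end

section
/- Limiting decrement of the function value along gradient descent (Euclidean case of Proposition 3.9(1)): suppose κ* := inf_{y ∈ ℝⁿ} ‖∇f(y)‖ > 0 and let (x_i) be the gradient-descent sequence with step size 1/L from any initial point x₀. Then f(x_{i+1}) − f(x_i) converges to −(κ*)²/L as i → ∞. -/
open Filter
open scoped RealInnerProductSpace

namespace GDAux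

variable {E : Type*} [NormedAddCommGroup E] [InnerProductSpace ℝ E] [CompleteSpace E]

lemma line_deriv {f : E → ℝ} {g : E → E} (hg : ∀ x, HasGradientAt f (g x) x) (y d : E) (t : ℝ) :
    HasDerivAt (fun t : ℝ => f (y + t • d)) ⟪g (y + t • d), d⟫ t := by
  have h1 : HasDerivAt (fun t : ℝ => y + t • d) d t := by
    simpa using ((hasDerivAt_id t).smul_const d).const_add y
  have h2 := (hg (y + t • d)).hasFDerivAt.comp_hasDerivAt t h1
  simp only [InnerProductSpace.toDual_apply_apply] at h2
  exact h2

lemma first_order {f : E → ℝ} {g : E → E} (hg : ∀ x, HasGradientAt f (g x) x)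
    (hc : ConvexOn ℝ Set.univ f) (y z : E) : f y + ⟪g y, z - y⟫ ≤ f z := by
  have hcv : ConvexOn ℝ Set.univ (fun t : ℝ => f (y + t • (z - y))) := by
    have := hc.comp_affineMap (AffineMap.lineMap y z : ℝ →ᵃ[ℝ] E)
    refine (this.congr ?_)
    intro t _
    simp [AffineMap.lineMap_apply, add_comm]
  have h := hcv.le_slope_of_hasDerivAt (Set.mem_univ (0:ℝ)) (Set.mem_univ (1:ℝ)) one_pos
    (line_deriv hg y (z - y) 0)
  simp [slope_def_field] at h
  linarith

lemma descent {f : E → ℝ} {g : E → E} (hg : ∀ x, HasGradientAt f (g x) x) {L : ℝ}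
    (hs : ∀ y z, ‖g y - g z‖ ≤ L * ‖y - z‖) (y z : E) :
    f z ≤ f y + ⟪g y, z - y⟫ + L / 2 * ‖z - y‖ ^ 2 := by
  set d := z - y with hd
  have hder : ∀ t : ℝ, HasDerivAt
      (fun t : ℝ => f (y + t • d) - (t * ⟪g y, d⟫ + L / 2 * ‖d‖ ^ 2 * t ^ 2))
      (⟪g (y + t • d), d⟫ - (⟪g y, d⟫ + L / 2 * ‖d‖ ^ 2 * (2 * t))) t := by
    intro t
    refine (line_deriv hg y d t).sub (HasDerivAt.add ?_ ?_)
    · simpa using (hasDerivAt_id t).mul_const ⟪g y, d⟫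
    · simpa using (hasDerivAt_pow 2 t).const_mul (L / 2 * ‖d‖ ^ 2)
  have hanti := antitoneOn_of_deriv_nonpos (convex_Icc (0:ℝ) 1)
    (fun t _ => (hder t).continuousAt.continuousWithinAt)
    (fun t _ => (hder t).differentiableAt.differentiableWithinAt)
    (by
      intro t ht
      rw [interior_Icc] at ht
      rw [(hder t).deriv]
      have h1 : ⟪g (y + t • d) - g y, d⟫ ≤ ‖g (y + t • d) - g y‖ * ‖d‖ :=
        real_inner_le_norm _ _
      have h2 := hs (y + t • d) y
      rw [add_sub_cancel_left, norm_smul, Real.norm_of_nonneg ht.1.le] at h2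
      have h3 := mul_le_mul_of_nonneg_right h2 (norm_nonneg d)
      rw [inner_sub_left] at h1
      nlinarith)
  have := hanti (Set.left_mem_Icc.2 zero_le_one) (Set.right_mem_Icc.2 zero_le_one) zero_le_one
  simp [hd] at this
  linarith

lemma strong {f : E → ℝ} {g : E → E} (hg : ∀ x, HasGradientAt f (g x) x)
    (hc : ConvexOn ℝ Set.univ f) {L : ℝ} (hL : 0 < L)
    (hs : ∀ y z, ‖g y - g z‖ ≤ L * ‖y - z‖) (y z : E) :
    f y + ⟪g y, z - y⟫ + 1 / (2 * L) * ‖g z - g y‖ ^ 2 ≤ f z := by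
  have h1 := first_order hg hc y (z - (1 / L) • (g z - g y))
  have h2 := descent hg hs z (z - (1 / L) • (g z - g y))
  have e1 : z - (1 / L) • (g z - g y) - z = -((1 / L) • (g z - g y)) := by abel
  have e2 : z - (1 / L) • (g z - g y) - y = (z - y) - ((1 / L) • (g z - g y)) := by abel
  rw [e1, norm_neg, norm_smul, inner_neg_right, real_inner_smul_right,
    Real.norm_of_nonneg (by positivity)] at h2
  rw [e2, inner_sub_right, real_inner_smul_right] at h1
  have h3 : ⟪g z, g z - g y⟫ - ⟪g y, g z - g y⟫ = ‖g z - g y‖ ^ 2 := by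
    rw [← inner_sub_left, real_inner_self_eq_norm_sq]
  have h4 : L / 2 * (1 / L * ‖g z - g y‖) ^ 2 = 1 / (2 * L) * ‖g z - g y‖ ^ 2 := by
    field_simp
  have h5 : 1 / L * ⟪g z, g z - g y⟫ - 1 / L * ⟪g y, g z - g y⟫
      = 2 * (1 / (2 * L) * ‖g z - g y‖ ^ 2) := by
    rw [← mul_sub, h3]; field_simp
  linarith

lemma coco {f : E → ℝ} {g : E → E} (hg : ∀ x, HasGradientAt f (g x) x)
    (hc : ConvexOn ℝ Set.univ f) {L : ℝ} (hL : 0 < L)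
    (hs : ∀ y z, ‖g y - g z‖ ≤ L * ‖y - z‖) (y z : E) :
    1 / L * ‖g y - g z‖ ^ 2 ≤ ⟪g y - g z, y - z⟫ := by
  have h1 := strong hg hc hL hs y z
  have h2 := strong hg hc hL hs z y
  rw [norm_sub_rev] at h1
  have e : ⟪g y, z - y⟫ = - ⟪g y, y - z⟫ := by rw [← inner_neg_right, neg_sub]
  rw [inner_sub_left]
  have e2 : 1 / L * ‖g y - g z‖ ^ 2 = 2 * (1 / (2 * L) * ‖g y - g z‖ ^ 2) := by field_simp
  linarith

lemma nonexp {f : E → ℝ} {g : E → E} (hg : ∀ x, HasGradientAt f (g x) x)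
    (hc : ConvexOn ℝ Set.univ f) {L : ℝ} (hL : 0 < L)
    (hs : ∀ y z, ‖g y - g z‖ ≤ L * ‖y - z‖) (y z : E) :
    ‖(y - (1 / L) • g y) - (z - (1 / L) • g z)‖ ≤ ‖y - z‖ := by
  have e : (y - (1 / L) • g y) - (z - (1 / L) • g z) = (y - z) - (1 / L) • (g y - g z) := by
    rw [smul_sub]; abel
  have h := coco hg hc hL hs y z
  refine le_of_sq_le_sq ?_ (norm_nonneg _)
  rw [e, norm_sub_sq_real, norm_smul, real_inner_smul_right, real_inner_comm,
    Real.norm_of_nonneg (by positivity), mul_pow]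
  have hp : 0 < 1 / L := by positivity
  have h2 := mul_le_mul_of_nonneg_left h hp.le
  have h3 : 0 ≤ (1 / L) ^ 2 * ‖g y - g z‖ ^ 2 := by positivity
  nlinarith

lemma step {f : E → ℝ} {g : E → E} (hg : ∀ x, HasGradientAt f (g x) x)
    (hc : ConvexOn ℝ Set.univ f) {L : ℝ} (hL : 0 < L)
    (hs : ∀ y z, ‖g y - g z‖ ≤ L * ‖y - z‖) (y z : E) (hz : z = y - (1 / L) • g y) :
    ‖g z‖ ^ 2 / L ≤ f y - f z ∧ f y - f z ≤ ‖g y‖ ^ 2 / L := by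
  have hp : 0 < 1 / L := by positivity
  have h := coco hg hc hL hs y z
  have e : y - z = (1 / L) • g y := by rw [hz]; abel
  have e' : z - y = -((1 / L) • g y) := by rw [hz]; abel
  have h1 := first_order hg hc y z
  have h2 := first_order hg hc z y
  rw [e, real_inner_smul_right] at h h2
  rw [e', inner_neg_right, real_inner_smul_right, real_inner_self_eq_norm_sq] at h1
  have h3 := le_of_mul_le_mul_left h hp
  rw [norm_sub_sq_real, inner_sub_left, real_inner_self_eq_norm_sq, real_inner_comm] at h3
  have h4 : ‖g z‖ ^ 2 ≤ ⟪g z, g y⟫ := by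
    have := real_inner_comm (g y) (g z)
    linarith
  have h5 := mul_le_mul_of_nonneg_left h4 hp.le
  rw [div_eq_inv_mul, div_eq_inv_mul, ← one_div]
  constructor <;> linarith

lemma main {f : E → ℝ} {g : E → E} (hg : ∀ x, HasGradientAt f (g x) x)
    (hc : ConvexOn ℝ Set.univ f) {L : ℝ} (hL : 0 < L)
    (hs : ∀ y z, ‖g y - g z‖ ≤ L * ‖y - z‖)
    (x : ℕ → E) (hx : ∀ i, x (i + 1) = x i - (1 / L) • g (x i)) :
    Tendsto (fun i => f (x (i + 1)) - f (x i)) atTop (nhds (-(⨅ y, ‖g y‖) ^ 2 / L)) := by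
  have mono : ∀ u : ℕ → E, (∀ i, u (i + 1) = u i - (1 / L) • g (u i)) →
      Antitone (fun i => ‖g (u i)‖) := by
    intro u hu
    refine antitone_nat_of_succ_le fun i => ?_
    have h := step hg hc hL hs (u i) (u (i+1)) (hu i)
    have h' := (div_le_div_iff_of_pos_right hL).1 (h.1.trans h.2)
    exact le_of_sq_le_sq h' (norm_nonneg _)
  have hbdd : BddBelow (Set.range fun y => ‖g y‖) := ⟨0, by rintro _ ⟨y, rfl⟩; exact norm_nonneg _⟩
  have hbx : BddBelow (Set.range fun i => ‖g (x i)‖) := ⟨0, by rintro _ ⟨y, rfl⟩; exact norm_nonneg _⟩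
  have hlim := tendsto_atTop_ciInf (mono x hx) hbx
  set m := ⨅ i, ‖g (x i)‖ with hm
  have hm0 : 0 ≤ m := le_ciInf fun i => norm_nonneg _
  have hmi : ∀ i, m ≤ ‖g (x i)‖ := fun i => ciInf_le hbx i
  have hmk : m = ⨅ y, ‖g y‖ := by
    refine le_antisymm (le_ciInf fun y => ?_) (le_ciInf fun i => ciInf_le hbdd (x i))
    let u : ℕ → E := fun i => (fun z => z - (1 / L) • g z)^[i] y
    have hu : ∀ i, u (i + 1) = u i - (1 / L) • g (u i) := fun i =>
      Function.iterate_succ_apply' _ _ _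
    have hu0 : u 0 = y := rfl
    have hdist : ∀ i, ‖x i - u i‖ ≤ ‖x 0 - y‖ := by
      intro i
      induction i with
      | zero => exact le_rfl
      | succ i ih => rw [hx, hu]; exact (nonexp hg hc hL hs _ _).trans ih
    have hfx : ∀ i : ℕ, f (x i) ≤ f (x 0) - i * (m ^ 2 / L) := by
      intro i
      induction i with
      | zero => simp
      | succ i ih =>
        have h := (step hg hc hL hs _ _ (hx i)).1
        have : m ^ 2 / L ≤ ‖g (x (i+1))‖ ^ 2 / L := by gcongr; exact hmi _
        push_cast; linarith
    have hgu : ∀ i, ‖g (u i)‖ ≤ ‖g y‖ := fun i => mono u hu (Nat.zero_le i)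
    have hfu : ∀ i : ℕ, f y - i * (‖g y‖ ^ 2 / L) ≤ f (u i) := by
      intro i
      induction i with
      | zero => simp [hu0]
      | succ i ih =>
        have h := (step hg hc hL hs _ _ (hu i)).2
        have : ‖g (u i)‖ ^ 2 / L ≤ ‖g y‖ ^ 2 / L := by gcongr; exact hgu _
        push_cast; linarith
    by_contra! hlt
    have hpos : 0 < m ^ 2 / L - ‖g y‖ ^ 2 / L := by
      rw [sub_pos]; gcongr
    obtain ⟨N, hN⟩ := exists_nat_gt
      ((f (x 0) - f y + ‖g y‖ * ‖x 0 - y‖) / (m ^ 2 / L - ‖g y‖ ^ 2 / L))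
    rw [div_lt_iff₀ hpos] at hN
    have h1 := first_order hg hc (u N) (x N)
    have h2 := (abs_le.1 (abs_real_inner_le_norm (g (u N)) (x N - u N))).1
    have h3 : ‖g (u N)‖ * ‖x N - u N‖ ≤ ‖g y‖ * ‖x 0 - y‖ :=
      mul_le_mul (hgu N) (hdist N) (norm_nonneg _) (norm_nonneg _)
    have := hfx N
    have := hfu N
    linarith
  rw [← hmk]
  have hl2 : Tendsto (fun i => -‖g (x i)‖ ^ 2 / L) atTop (nhds (-m ^ 2 / L)) :=
    ((hlim.pow 2).neg).div_const L
  refine tendsto_of_tendsto_of_tendsto_of_le_of_le hl2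
    (hl2.comp (tendsto_add_atTop_nat 1)) (fun i => ?_) (fun i => ?_)
  · have h := (step hg hc hL hs _ _ (hx i)).2
    simp only [neg_div]; linarith
  · have h := (step hg hc hL hs _ _ (hx i)).1
    simp only [neg_div, Function.comp]; linarith

end GDAux

/-- Limiting decrement of the function value along gradient descent (Euclidean case
of Proposition 3.9(1)): if `κ* := inf_y ‖∇f(y)‖ > 0` and `(x_i)` is the
gradient-descent sequence with step size `1/L`, then
`f(x_{i+1}) - f(x_i) → -(κ*)²/L`. -/
theorem gradient_descent_value_decrement {n : ℕ} (hn : 1 ≤ n)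
    (f : EuclideanSpace ℝ (Fin n) → ℝ) (L : ℝ) (hL : 0 < L)
    (hconv : ConvexOn ℝ Set.univ f) (hdiff : Differentiable ℝ f)
    (hsmooth : ∀ y z : EuclideanSpace ℝ (Fin n),
      ‖gradient f y - gradient f z‖ ≤ L * ‖y - z‖)
    (hκ : 0 < ⨅ y, ‖gradient f y‖)
    (x : ℕ → EuclideanSpace ℝ (Fin n))
    (hrec : ∀ i : ℕ, x (i + 1) = x i - (1 / L) • gradient f (x i)) :
    Tendsto (fun i => f (x (i + 1)) - f (x i)) atTop
      (nhds (-(⨅ y, ‖gradient f y‖) ^ 2 / L)) :=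
  GDAux.main (fun y => (hdiff y).hasGradientAt) hconv hL hsmooth x hrec
end

section
/- Gradient flow as a minimum-norm point algorithm (Theorem 3.12(1)): suppose κ* := inf_{y ∈ ℝⁿ} ‖∇f(y)‖ > 0 and let x : [0,∞) → ℝⁿ be a gradient-flow trajectory of f. Then the closure of the gradient image {∇f(y) : y ∈ ℝⁿ} is a convex set and contains a unique point p* of minimum Euclidean norm; moreover ∇f(x(t)) converges to p* and x(t)/t converges to −p* as t → ∞. -/
open Filter
open scoped RealInnerProductSpace

section Aux

lemma le_of_sq_le_sq_aux {a b : ℝ} (h : a ^ 2 ≤ b ^ 2) (hb : 0 ≤ b) : a ≤ b :=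
  (le_abs_self a).trans (abs_le_of_sq_le_sq h hb)

variable {E : Type*} [NormedAddCommGroup E] [InnerProductSpace ℝ E] [CompleteSpace E]

lemma gf_chain {f : E → ℝ} (hf : ContDiff ℝ 1 f) {c : ℝ → E} {c' : E} {t : ℝ}
    (hc : HasDerivAt c c' t) :
    HasDerivAt (fun s => f (c s)) ⟪gradient f (c t), c'⟫ t := by
  have h1 : HasFDerivAt f (fderiv ℝ f (c t)) (c t) :=
    ((hf.differentiable (by norm_num)) (c t)).hasFDerivAt
  have h2 := h1.comp_hasDerivAt t hc
  rw [inner_gradient_left]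
  exact h2

lemma gf_grad_ineq {f : E → ℝ} (hconv : ConvexOn ℝ Set.univ f) (hf : ContDiff ℝ 1 f)
    (y z : E) : f y + ⟪gradient f y, z - y⟫ ≤ f z := by
  have hline : HasDerivAt (fun s : ℝ => y + s • (z - y)) (z - y) 0 := by
    simpa using ((hasDerivAt_id (0 : ℝ)).smul_const (z - y)).const_add y
  have hd := gf_chain hf hline
  have hc : ConvexOn ℝ Set.univ (fun s : ℝ => f (y + s • (z - y))) := by
    refine ⟨convex_univ, fun a _ b _ u v hu hv huv => ?_⟩
    have := hconv.2 (Set.mem_univ (y + a • (z - y))) (Set.mem_univ (y + b • (z - y))) hu hv huv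
    refine le_trans (le_of_eq ?_) this
    show f _ = f _
    congr 1
    have hv' : v = 1 - u := by linarith
    subst hv'
    simp only [smul_eq_mul]
    module
  have := hc.le_slope_of_hasDerivAt (Set.mem_univ 0) (Set.mem_univ 1) one_pos hd
  simp only [slope_def_field, zero_smul, one_smul, add_zero, sub_zero, div_one,
    add_sub_cancel] at this
  linarith

lemma gf_mono_s13 {f : E → ℝ} (hconv : ConvexOn ℝ Set.univ f) (hf : ContDiff ℝ 1 f)
    (y z : E) : 0 ≤ ⟪gradient f z - gradient f y, z - y⟫ := by
  have h1 := gf_grad_ineq hconv hf y z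
  have h2 := gf_grad_ineq hconv hf z y
  have h3 : ⟪gradient f z, y - z⟫ = - ⟪gradient f z, z - y⟫ := by
    rw [← inner_neg_right, neg_sub]
  rw [inner_sub_left]
  linarith

lemma gf_mem_closure [FiniteDimensional ℝ E] {f : E → ℝ} (hf : ContDiff ℝ 1 f)
    (p : E) (c : ℝ) (hc : ∀ z, c ≤ f z - ⟪p, z⟫) :
    p ∈ closure (Set.range (gradient f)) := by
  have : ProperSpace E := FiniteDimensional.proper ℝ E
  have hc0 : c ≤ f 0 := by simpa using hc 0
  have key : ∀ ε : ℝ, 0 < ε → ∃ z, ‖p - gradient f z‖ ^ 2 ≤ 2 * ε * (f 0 - c) := by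
    intro ε hε
    have hcont : Continuous (fun z => f z - ⟪p, z⟫ + ε / 2 * ‖z‖ ^ 2) := by
      have := hf.continuous
      fun_prop
    have hbd : ∀ z, f z - ⟪p, z⟫ + ε / 2 * ‖z‖ ^ 2 ≤ f 0 → (ε * ‖z‖) ^ 2 ≤ 2 * ε * (f 0 - c) := by
      intro z hz
      have := hc z
      have h : ε / 2 * ‖z‖ ^ 2 ≤ f 0 - c := by linarith
      nlinarith
    obtain ⟨z, hz⟩ := hcont.exists_forall_le_of_isBounded 0 (by
      refine (Metric.isBounded_closedBall (x := (0 : E))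
        (r := Real.sqrt (2 * ε * (f 0 - c)) / ε)).subset ?_
      intro z hz
      have hz' : f z - ⟪p, z⟫ + ε / 2 * ‖z‖ ^ 2 ≤ f 0 := by simpa using hz
      have h := Real.le_sqrt_of_sq_le (hbd z hz')
      rw [mem_closedBall_zero_iff, le_div_iff₀ hε]
      linarith)
    refine ⟨z, ?_⟩
    have hz0 : f z - ⟪p, z⟫ + ε / 2 * ‖z‖ ^ 2 ≤ f 0 := by simpa using hz 0
    have hst : ∀ v, ⟪gradient f z - p + ε • z, v⟫ = 0 := by
      intro v
      have hline : HasDerivAt (fun s : ℝ => z + s • v) v 0 := by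
        simpa using ((hasDerivAt_id (0 : ℝ)).smul_const v).const_add z
      have hd1 := gf_chain hf hline
      have hd2 := ((hasDerivAt_const (0 : ℝ) p).inner ℝ hline)
      have hd3 := (hline.norm_sq).const_mul (ε / 2)
      have hd := (hd1.sub hd2).add hd3
      have hmin : IsLocalMin (fun s : ℝ => f (z + s • v) - ⟪p, z + s • v⟫
          + ε / 2 * ‖z + s • v‖ ^ 2) 0 := by
        refine Filter.Eventually.of_forall fun s => ?_
        simpa using hz (z + s • v)
      have := hmin.hasDerivAt_eq_zero hd
      simp only [zero_smul, add_zero, inner_zero_left] at this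
      rw [inner_add_left, inner_sub_left, real_inner_smul_left]
      linarith
    have h0 : gradient f z - p + ε • z = 0 := inner_self_eq_zero.1 (hst _)
    have h1 : p - gradient f z = ε • z := by
      rw [← sub_eq_zero, ← neg_eq_zero, ← h0]; abel
    rw [h1, norm_smul, Real.norm_of_nonneg hε.le]
    exact hbd z hz0
  rw [Metric.mem_closure_iff]
  intro δ hδ
  obtain ⟨z, hz⟩ := key (δ ^ 2 / (4 * (f 0 - c + 1))) (by
    have : 0 < f 0 - c + 1 := by linarith
    positivity)
  refine ⟨_, ⟨z, rfl⟩, ?_⟩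
  rw [dist_eq_norm]
  refine lt_of_pow_lt_pow_left₀ 2 hδ.le (lt_of_le_of_lt hz ?_)
  have h1 : 0 < f 0 - c + 1 := by linarith
  rw [show 2 * (δ ^ 2 / (4 * (f 0 - c + 1))) * (f 0 - c)
    = (δ ^ 2 * (2 * (f 0 - c))) / (4 * (f 0 - c + 1)) by ring, div_lt_iff₀ (by positivity)]
  have : 0 < δ ^ 2 := by positivity
  nlinarith

lemma gf_convex [FiniteDimensional ℝ E] {f : E → ℝ} (hconv : ConvexOn ℝ Set.univ f)
    (hf : ContDiff ℝ 1 f) : Convex ℝ (closure (Set.range (gradient f))) := by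
  let D : Set E := {p | ∃ c : ℝ, ∀ z, c ≤ f z - ⟪p, z⟫}
  have hD : Convex ℝ D := by
    rintro p ⟨c, hc⟩ q ⟨d, hd⟩ a b ha hb hab
    refine ⟨a * c + b * d, fun z => ?_⟩
    have h1 := mul_le_mul_of_nonneg_left (hc z) ha
    have h2 := mul_le_mul_of_nonneg_left (hd z) hb
    rw [inner_add_left, real_inner_smul_left, real_inner_smul_left]
    have : f z = a * f z + b * f z := by rw [← add_mul, hab, one_mul]
    linarith
  have h1 : Set.range (gradient f) ⊆ D := by
    rintro _ ⟨y, rfl⟩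
    refine ⟨f y - ⟪gradient f y, y⟫, fun z => ?_⟩
    have := gf_grad_ineq hconv hf y z
    rw [inner_sub_right] at this
    linarith
  have h2 : D ⊆ closure (Set.range (gradient f)) := by
    rintro p ⟨c, hc⟩
    exact gf_mem_closure hf p c hc
  have : closure (Set.range (gradient f)) = closure D :=
    (closure_mono h1).antisymm (closure_minimal h2 isClosed_closure)
  rw [this]
  exact hD.closure

lemma gf_norm_anti {f : E → ℝ} (hconv : ConvexOn ℝ Set.univ f) (hf : ContDiff ℝ 1 f)
    {x : ℝ → E} (hx : ∀ t : ℝ, 0 ≤ t → HasDerivAt x (-(gradient f (x t))) t)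
    {s t : ℝ} (hs : 0 ≤ s) (hst : s ≤ t) : ‖gradient f (x t)‖ ≤ ‖gradient f (x s)‖ := by
  have hcontr : ∀ h : ℝ, 0 < h → ‖x (t + h) - x t‖ ≤ ‖x (s + h) - x s‖ := by
    intro h hh
    have hd : ∀ u : ℝ, 0 ≤ u → HasDerivAt (fun u => ‖x (u + h) - x u‖ ^ 2)
        (2 * ⟪x (u + h) - x u, -(gradient f (x (u + h))) - -(gradient f (x u))⟫) u := by
      intro u hu
      exact (((hx (u + h) (by linarith)).comp_add_const u h).sub (hx u hu)).norm_sq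
    have hanti : AntitoneOn (fun u => ‖x (u + h) - x u‖ ^ 2) (Set.Ici 0) := by
      refine antitoneOn_of_hasDerivWithinAt_nonpos (convex_Ici 0)
        (fun u hu => (hd u hu).continuousAt.continuousWithinAt)
        (fun u hu => (hd u (interior_subset hu)).hasDerivWithinAt) (fun u hu => ?_)
      have := gf_mono_s13 hconv hf (x u) (x (u + h))
      rw [real_inner_comm] at this
      rw [show -(gradient f (x (u + h))) - -(gradient f (x u))
        = -(gradient f (x (u + h)) - gradient f (x u)) by abel, inner_neg_right]
      linarith
    have := hanti (Set.mem_Ici.2 hs) (Set.mem_Ici.2 (hs.trans hst)) hst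
    exact le_of_sq_le_sq_aux this (norm_nonneg _)
  have h1 := (hx t (hs.trans hst)).tendsto_slope_zero_right.norm
  have h2 := (hx s hs).tendsto_slope_zero_right.norm
  rw [norm_neg] at h1 h2
  refine le_of_tendsto_of_tendsto h1 h2 ?_
  filter_upwards [self_mem_nhdsWithin] with h hh
  rw [norm_smul, norm_smul]
  exact mul_le_mul_of_nonneg_left (hcontr h hh) (norm_nonneg _)

lemma gf_bound {f : E → ℝ} (hconv : ConvexOn ℝ Set.univ f) (hf : ContDiff ℝ 1 f)
    {x : ℝ → E} (hx : ∀ t : ℝ, 0 ≤ t → HasDerivAt x (-(gradient f (x t))) t)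
    (z : E) {T : ℝ} (hT : 0 ≤ T) :
    T ^ 2 * ‖gradient f (x T)‖ ^ 2 ≤ T ^ 2 * ‖gradient f z‖ ^ 2 + ‖x 0 - z‖ ^ 2 := by
  set m := ‖gradient f (x T)‖ ^ 2 with hm
  have hd : ∀ s : ℝ, 0 ≤ s → HasDerivAt
      (fun s => s ^ 2 / 2 * m + s * (f (x s) - f z) + 1 / 2 * ‖x s - z‖ ^ 2)
      (s * m + ((f (x s) - f z) + s * (-‖gradient f (x s)‖ ^ 2))
        + 1 / 2 * (2 * ⟪x s - z, -(gradient f (x s))⟫)) s := by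
    intro s hs
    have h1 : HasDerivAt (fun s : ℝ => s ^ 2 / 2 * m) (s * m) s := by
      have := (((hasDerivAt_id s).pow 2).div_const 2).mul_const m
      exact this.congr_deriv (by simp)
    have h2 : HasDerivAt (fun s => s * (f (x s) - f z))
        ((f (x s) - f z) + s * (-‖gradient f (x s)‖ ^ 2)) s := by
      have := (hasDerivAt_id s).mul ((gf_chain hf (hx s hs)).sub_const (f z))
      exact this.congr_deriv (by simp)
    exact (h1.add h2).add ((((hx s hs).sub_const z).norm_sq).const_mul (1 / 2))
  have hanti : AntitoneOn
      (fun s => s ^ 2 / 2 * m + s * (f (x s) - f z) + 1 / 2 * ‖x s - z‖ ^ 2) (Set.Icc 0 T) := by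
    refine antitoneOn_of_hasDerivWithinAt_nonpos (convex_Icc 0 T)
      (fun u hu => (hd u hu.1).continuousAt.continuousWithinAt)
      (fun u hu => (hd u (interior_subset hu).1).hasDerivWithinAt) (fun u hu => ?_)
    have hu' : u ∈ Set.Icc 0 T := interior_subset hu
    have h1 : m ≤ ‖gradient f (x u)‖ ^ 2 :=
      pow_le_pow_left₀ (norm_nonneg _) (gf_norm_anti hconv hf hx hu'.1 hu'.2) 2
    have h2 := gf_grad_ineq hconv hf (x u) z
    have h3 : ⟪x u - z, -(gradient f (x u))⟫ = ⟪gradient f (x u), z - x u⟫ := by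
      rw [real_inner_comm, inner_neg_left, ← inner_neg_right, neg_sub]
    rw [h3]
    have h4 := mul_le_mul_of_nonneg_left h1 hu'.1
    linarith
  have h := hanti (Set.left_mem_Icc.2 hT) (Set.right_mem_Icc.2 hT) hT
  simp only at h
  have h1 := gf_grad_ineq hconv hf z (x T)
  have h2 := neg_le_of_abs_le (abs_real_inner_le_norm (gradient f z) (x T - z))
  have h3 : T * (-(‖gradient f z‖ * ‖x T - z‖)) ≤ T * (f (x T) - f z) :=
    mul_le_mul_of_nonneg_left (by linarith) hT
  nlinarith [sq_nonneg (T * ‖gradient f z‖ - ‖x T - z‖)]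

lemma gf_avg {x : ℝ → E} {g : ℝ → E} {p : E} (hx : ∀ t : ℝ, 0 ≤ t → HasDerivAt x (-(g t)) t)
    (hg : Tendsto g atTop (nhds p)) : Tendsto (fun t => t⁻¹ • x t) atTop (nhds (-p)) := by
  rw [Metric.tendsto_atTop]
  intro ε hε
  obtain ⟨T, hT⟩ := Metric.tendsto_atTop.1 hg (ε / 2) (by linarith)
  set S := max T 1 with hS
  have hS1 : 1 ≤ S := le_max_right _ _
  set M := ‖x S + S • p‖ with hM
  have hM0 : 0 ≤ M := norm_nonneg _
  refine ⟨S + 2 * M / ε, fun t ht => ?_⟩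
  have hMe : 0 ≤ 2 * M / ε := by positivity
  have hSt : S ≤ t := by linarith
  have ht0 : 0 < t := by linarith
  have hd : ∀ u ∈ Set.Ici S, HasDerivWithinAt (fun u => x u + u • p) (-(g u) + p) (Set.Ici S) u := by
    intro u hu
    have hu' : S ≤ u := hu
    have := (hx u (by linarith)).add ((hasDerivAt_id u).smul_const p)
    simp only [one_smul] at this
    exact this.hasDerivWithinAt
  have hb := (convex_Ici S).norm_image_sub_le_of_norm_hasDerivWithin_le (C := ε / 2) hd
    (fun u hu => by
      have := (hT u ((le_max_left _ _).trans hu)).le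
      rw [dist_eq_norm, ← norm_neg] at this
      rwa [show -(g u) + p = -(g u - p) by abel]) (Set.mem_Ici.2 le_rfl) (Set.mem_Ici.2 hSt)
  rw [Real.norm_of_nonneg (by linarith)] at hb
  have hn : ‖x t + t • p‖ ≤ ε / 2 * (t - S) + M := by
    calc ‖x t + t • p‖ = ‖((x t + t • p) - (x S + S • p)) + (x S + S • p)‖ := by
          rw [sub_add_cancel]
      _ ≤ _ := norm_add_le _ _
      _ ≤ _ := by linarith
  have he : t⁻¹ • x t - -p = t⁻¹ • (x t + t • p) := by
    rw [smul_add, smul_smul, inv_mul_cancel₀ ht0.ne', one_smul, sub_neg_eq_add]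
  rw [dist_eq_norm, he, norm_smul, Real.norm_of_nonneg (by positivity), inv_mul_lt_iff₀ ht0]
  have h5 : 2 * M / ε ≤ t - S := by linarith
  rw [div_le_iff₀ hε] at h5
  nlinarith

end Aux

/-- Gradient flow as a minimum-norm point algorithm (Theorem 3.12(1)): if
`κ* := inf_y ‖∇f(y)‖ > 0` and `x` is a gradient-flow trajectory of `f`, then the
closure of the gradient image `{∇f(y) : y ∈ ℝⁿ}` is convex and contains a unique
minimum-norm point `p*`; moreover `∇f(x(t)) → p*` and `x(t)/t → -p*` as `t → ∞`. -/
theorem gradient_flow_minimum_norm_point {n : ℕ} (hn : 1 ≤ n)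
    (f : EuclideanSpace ℝ (Fin n) → ℝ)
    (hconv : ConvexOn ℝ Set.univ f) (hf : ContDiff ℝ 1 f)
    (hκ : 0 < ⨅ y, ‖gradient f y‖)
    (x : ℝ → EuclideanSpace ℝ (Fin n))
    (hx : ∀ t : ℝ, 0 ≤ t → HasDerivAt x (-(gradient f (x t))) t) :
    Convex ℝ (closure (Set.range (gradient f))) ∧
    ∃ p : EuclideanSpace ℝ (Fin n),
      p ∈ closure (Set.range (gradient f)) ∧
      (∀ q ∈ closure (Set.range (gradient f)), ‖p‖ ≤ ‖q‖) ∧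
      (∀ p' ∈ closure (Set.range (gradient f)),
        (∀ q ∈ closure (Set.range (gradient f)), ‖p'‖ ≤ ‖q‖) → p' = p) ∧
      Tendsto (fun t => gradient f (x t)) atTop (nhds p) ∧
      Tendsto (fun t => t⁻¹ • x t) atTop (nhds (-p)) := by
  have hC := gf_convex hconv hf
  refine ⟨hC, ?_⟩
  have hne : (closure (Set.range (gradient f))).Nonempty :=
    ⟨gradient f 0, subset_closure ⟨0, rfl⟩⟩
  obtain ⟨p, hp, hpmin⟩ := exists_norm_eq_iInf_of_complete_convex hne
    isClosed_closure.isComplete hC 0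
  have hvar := (norm_eq_iInf_iff_real_inner_le_zero hC hp).1 hpmin
  have hvar' : ∀ q ∈ closure (Set.range (gradient f)), ‖q - p‖ ^ 2 ≤ ‖q‖ ^ 2 - ‖p‖ ^ 2 := by
    intro q hq
    have h := hvar q hq
    rw [zero_sub, inner_neg_left, inner_sub_right, real_inner_self_eq_norm_sq] at h
    rw [norm_sub_sq_real, real_inner_comm]
    linarith
  have hmin : ∀ q ∈ closure (Set.range (gradient f)), ‖p‖ ≤ ‖q‖ := by
    intro q hq
    have := hvar' q hq
    exact le_of_sq_le_sq_aux (by nlinarith [sq_nonneg ‖q - p‖]) (norm_nonneg _)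
  have hlim : Tendsto (fun t => gradient f (x t)) atTop (nhds p) := by
    rw [tendsto_iff_norm_sub_tendsto_zero]
    rw [Metric.tendsto_atTop]
    intro ε hε
    -- a point whose gradient nearly has minimal norm
    have hcl : ∃ z, ‖gradient f z‖ ^ 2 < ‖p‖ ^ 2 + ε ^ 2 / 2 := by
      have hopen : IsOpen {q : EuclideanSpace ℝ (Fin n) | ‖q‖ ^ 2 < ‖p‖ ^ 2 + ε ^ 2 / 2} :=
        isOpen_lt (by fun_prop) (by fun_prop)
      obtain ⟨q, hq, ⟨z, rfl⟩⟩ := mem_closure_iff.1 hp _ hopen (by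
        have : 0 < ε ^ 2 := by positivity
        simp only [Set.mem_ofPred_eq]; linarith)
      exact ⟨z, hq⟩
    obtain ⟨z, hz⟩ := hcl
    set A := ‖x 0 - z‖ with hA
    have hA0 : 0 ≤ A := norm_nonneg _
    refine ⟨2 * A / ε + 1, fun t ht => ?_⟩
    have hAe : 0 ≤ 2 * A / ε := by positivity
    have ht0 : 0 < t := by linarith
    have hb := gf_bound hconv hf hx z ht0.le
    have hv := hvar' _ (subset_closure ⟨x t, rfl⟩)
    have h5 : 2 * A / ε ≤ t := by linarith
    rw [div_le_iff₀ hε] at h5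
    have h6 : (2 * A) ^ 2 ≤ (t * ε) ^ 2 := pow_le_pow_left₀ (by positivity) h5 2
    have h7 : A ^ 2 ≤ t ^ 2 * (ε ^ 2 / 4) := by nlinarith
    have ht2 : 0 < t ^ 2 := by positivity
    have h8 : ‖gradient f (x t)‖ ^ 2 ≤ ‖gradient f z‖ ^ 2 + ε ^ 2 / 4 := by
      refine le_of_mul_le_mul_left ?_ ht2
      linarith
    have h9 : ‖gradient f (x t) - p‖ ^ 2 < ε ^ 2 := by
      have : 0 < ε ^ 2 := by positivity
      linarith
    rw [Real.dist_eq, sub_zero, abs_norm]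
    exact lt_of_pow_lt_pow_left₀ 2 hε.le h9
  refine ⟨p, hp, hmin, ?_, hlim, gf_avg hx hlim⟩
  intro p' hp' hp'min
  have h1 := hvar' p' hp'
  have h2 : ‖p'‖ = ‖p‖ := le_antisymm (hp'min p hp) (hmin p' hp')
  rw [h2, sub_self] at h1
  have h3 : ‖p' - p‖ = 0 := by
    have := sq_nonneg ‖p' - p‖
    exact pow_eq_zero_iff (two_ne_zero) |>.1 (le_antisymm h1 this)
  exact sub_eq_zero.1 (norm_eq_zero.1 h3)
end

section
/- Gradient descent as a minimum-norm point algorithm (Theorem 3.12(2)): suppose κ* := inf_{y ∈ ℝⁿ} ‖∇f(y)‖ > 0 and let (x_i) be the gradient-descent sequence with step size 1/L from any initial point x₀. Let p* be the unique minimum-norm point of the closure of the gradient image {∇f(y) : y ∈ ℝⁿ} (this closure is convex, so p* exists and is unique). Then ∇f(x_i) converges to p* and x_i/i converges to −p*/L as i → ∞. -/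
open Filter
open scoped RealInnerProductSpace

section helpers

variable {E : Type*} [NormedAddCommGroup E] [InnerProductSpace ℝ E] [CompleteSpace E]

lemma gd_line {f : E → ℝ} {g : E → E} (hg : ∀ x, HasGradientAt f (g x) x) (x d : E) (t : ℝ) :
    HasDerivAt (fun t : ℝ => f (x + t • d)) ⟪g (x + t • d), d⟫ t := by
  have h1 : HasDerivAt (fun t : ℝ => x + t • d) d t := by
    simpa using ((hasDerivAt_id t).smul_const d).const_add x
  have h2 := (hg (x + t • d)).hasFDerivAt
  have := h2.comp_hasDerivAt t h1
  simpa [Function.comp_def] using this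

lemma gd_first {f : E → ℝ} {g : E → E} (hg : ∀ x, HasGradientAt f (g x) x)
    (hf : ConvexOn ℝ Set.univ f) (x y : E) : f x + ⟪g x, y - x⟫ ≤ f y := by
  have hc : ConvexOn ℝ Set.univ (fun t : ℝ => f (x + t • (y - x))) := by
    have := hf.comp_affineMap (AffineMap.lineMap x y : ℝ →ᵃ[ℝ] E)
    simpa [Function.comp_def, AffineMap.lineMap_apply, add_comm] using this
  have hd := gd_line hg x (y - x) 0
  have := hc.le_slope_of_hasDerivAt (Set.mem_univ 0) (Set.mem_univ 1) one_pos hd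
  simp [slope_def_field] at this
  linarith

lemma gd_descent_s14 {f : E → ℝ} {g : E → E} (hg : ∀ x, HasGradientAt f (g x) x) {L : ℝ}
    (hs : ∀ y z, ‖g y - g z‖ ≤ L * ‖y - z‖) (x y : E) :
    f y ≤ f x + ⟪g x, y - x⟫ + L / 2 * ‖y - x‖ ^ 2 := by
  set d := y - x with hd
  have hD : ∀ t : ℝ, HasDerivAt (fun t : ℝ => f (x + t • d) - t * ⟪g x, d⟫ - L / 2 * ‖d‖ ^ 2 * t ^ 2)
      (⟪g (x + t • d), d⟫ - ⟪g x, d⟫ - L * ‖d‖ ^ 2 * t) t := by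
    intro t
    have h := ((gd_line hg x d t).sub ((hasDerivAt_id t).mul_const ⟪g x, d⟫)).sub
      ((hasDerivAt_pow 2 t).const_mul (L / 2 * ‖d‖ ^ 2))
    refine HasDerivAt.congr_deriv h ?_
    norm_num
    ring
  have hA : AntitoneOn (fun t : ℝ => f (x + t • d) - t * ⟪g x, d⟫ - L / 2 * ‖d‖ ^ 2 * t ^ 2)
      (Set.Icc 0 1) := by
    apply antitoneOn_of_deriv_nonpos (convex_Icc 0 1)
    · exact fun t _ => (hD t).continuousAt.continuousWithinAt
    · exact fun t _ => (hD t).differentiableAt.differentiableWithinAt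
    · intro t ht
      rw [interior_Icc] at ht
      rw [(hD t).deriv, ← inner_sub_left]
      have h1 := real_inner_le_norm (g (x + t • d) - g x) d
      have h2 := hs (x + t • d) x
      rw [add_sub_cancel_left, norm_smul, Real.norm_of_nonneg ht.1.le] at h2
      nlinarith [norm_nonneg d]
  have := hA (Set.left_mem_Icc.2 zero_le_one) (Set.right_mem_Icc.2 zero_le_one) zero_le_one
  simp [hd] at this
  linarith

lemma gd_step {f : E → ℝ} {g : E → E} (hg : ∀ x, HasGradientAt f (g x) x) {L : ℝ} (hL : 0 < L)
    (hs : ∀ y z, ‖g y - g z‖ ≤ L * ‖y - z‖) (q y : E) :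
    f (y - (1 / L) • (g y - q)) - ⟪q, y - (1 / L) • (g y - q)⟫ ≤
      f y - ⟪q, y⟫ - 1 / (2 * L) * ‖g y - q‖ ^ 2 := by
  have h := gd_descent_s14 hg hs y (y - (1 / L) • (g y - q))
  rw [sub_sub_cancel_left, norm_neg, norm_smul, inner_neg_right, inner_smul_right,
    Real.norm_of_nonneg (by positivity)] at h
  rw [inner_sub_right q, inner_smul_right]
  have e : ⟪g y, g y - q⟫ = ‖g y - q‖ ^ 2 + ⟪q, g y - q⟫ := by
    rw [← real_inner_self_eq_norm_sq, ← inner_add_left, sub_add_cancel]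
  rw [e] at h
  have e2 : L / 2 * (1 / L * ‖g y - q‖) ^ 2 = 1 / (2 * L) * ‖g y - q‖ ^ 2 := by
    field_simp
  have e3 : 1 / L * ‖g y - q‖ ^ 2 = 2 * (1 / (2 * L) * ‖g y - q‖ ^ 2) := by
    field_simp
  rw [e2, mul_add, e3] at h
  linarith

lemma gd_coco {f : E → ℝ} {g : E → E} (hg : ∀ x, HasGradientAt f (g x) x)
    (hf : ConvexOn ℝ Set.univ f) {L : ℝ} (hL : 0 < L)
    (hs : ∀ y z, ‖g y - g z‖ ≤ L * ‖y - z‖) (x y : E) :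
    f x + ⟪g x, y - x⟫ + 1 / (2 * L) * ‖g y - g x‖ ^ 2 ≤ f y := by
  have h1 := gd_step hg hL hs (g x) y
  have h2 := gd_first hg hf x (y - (1 / L) • (g y - g x))
  rw [inner_sub_right] at h2 ⊢
  linarith

lemma gd_nonexp {f : E → ℝ} {g : E → E} (hg : ∀ x, HasGradientAt f (g x) x)
    (hf : ConvexOn ℝ Set.univ f) {L : ℝ} (hL : 0 < L)
    (hs : ∀ y z, ‖g y - g z‖ ≤ L * ‖y - z‖) (x y : E) :
    ‖(x - (1 / L) • g x) - (y - (1 / L) • g y)‖ ≤ ‖x - y‖ := by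
  have h1 := gd_coco hg hf hL hs x y
  have h2 := gd_coco hg hf hL hs y x
  rw [norm_sub_rev (g y), ← neg_sub x y, inner_neg_right] at h1
  have h3 : 1 / L * ‖g x - g y‖ ^ 2 ≤ ⟪x - y, g x - g y⟫ := by
    rw [real_inner_comm, inner_sub_left]
    have e3 : 1 / L * ‖g x - g y‖ ^ 2 = 2 * (1 / (2 * L) * ‖g x - g y‖ ^ 2) := by
      field_simp
    linarith
  apply le_of_sq_le_sq _ (norm_nonneg _)
  have e : (x - (1 / L) • g x) - (y - (1 / L) • g y) = (x - y) - (1 / L) • (g x - g y) := by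
    rw [smul_sub]; abel
  rw [e, norm_sub_sq_real, inner_smul_right, norm_smul, Real.norm_of_nonneg (by positivity)]
  have hL' : 0 < 1 / L := by positivity
  nlinarith [mul_le_mul_of_nonneg_left h3 hL'.le, mul_nonneg hL'.le (mul_nonneg hL'.le (sq_nonneg ‖g x - g y‖))]

lemma gd_mem_closure {f : E → ℝ} {g : E → E} (hg : ∀ x, HasGradientAt f (g x) x) {L : ℝ}
    (hL : 0 < L) (hs : ∀ y z, ‖g y - g z‖ ≤ L * ‖y - z‖) (q : E) (C : ℝ)
    (hq : ∀ y, C ≤ f y - ⟪q, y⟫) : q ∈ closure (Set.range g) := by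
  rw [Metric.mem_closure_range_iff]
  intro ε hε
  by_contra! hcon
  have key : ∀ k : ℕ, ∃ y, f y - ⟪q, y⟫ ≤ f 0 - k * (1 / (2 * L) * ε ^ 2) := by
    intro k
    induction k with
    | zero => exact ⟨0, by simp⟩
    | succ k ih =>
      obtain ⟨y, hy⟩ := ih
      refine ⟨_, (gd_step hg hL hs q y).trans ?_⟩
      have h := hcon y
      rw [dist_comm, dist_eq_norm] at h
      have : 1 / (2 * L) * ε ^ 2 ≤ 1 / (2 * L) * ‖g y - q‖ ^ 2 := by gcongr
      push_cast
      linarith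
  have hpos : 0 < 1 / (2 * L) * ε ^ 2 := by positivity
  obtain ⟨k, hk⟩ := exists_nat_gt ((f 0 - C) / (1 / (2 * L) * ε ^ 2))
  rw [div_lt_iff₀ hpos] at hk
  obtain ⟨y, hy⟩ := key k
  linarith [hq y]

lemma gd_convex {f : E → ℝ} {g : E → E} (hg : ∀ x, HasGradientAt f (g x) x)
    (hf : ConvexOn ℝ Set.univ f) {L : ℝ} (hL : 0 < L)
    (hs : ∀ y z, ‖g y - g z‖ ≤ L * ‖y - z‖) : Convex ℝ (closure (Set.range g)) := by
  have hD : Convex ℝ {q : E | ∃ C, ∀ y, C ≤ f y - ⟪q, y⟫} := by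
    rintro q ⟨C, hC⟩ r ⟨C', hC'⟩ a b ha hb hab
    refine ⟨a * C + b * C', fun y => ?_⟩
    rw [inner_add_left, real_inner_smul_left, real_inner_smul_left]
    have h1 := mul_le_mul_of_nonneg_left (hC y) ha
    have h2 := mul_le_mul_of_nonneg_left (hC' y) hb
    have : f y = a * f y + b * f y := by rw [← add_mul, hab, one_mul]
    linarith
  have : closure (Set.range g) = closure {q : E | ∃ C, ∀ y, C ≤ f y - ⟪q, y⟫} := by
    apply subset_antisymm
    · apply closure_mono
      rintro _ ⟨x, rfl⟩
      refine ⟨f x - ⟪g x, x⟫, fun y => ?_⟩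
      have := gd_first hg hf x y
      rw [inner_sub_right] at this
      linarith
    · apply closure_minimal _ isClosed_closure
      rintro q ⟨C, hC⟩
      exact gd_mem_closure hg hL hs q C hC
  rw [this]
  exact hD.closure

lemma gd_proj {K : Set E} (hK : Convex ℝ K) {p : E} (hp : p ∈ K) (hmin : ∀ q ∈ K, ‖p‖ ≤ ‖q‖)
    (q : E) (hq : q ∈ K) : ‖p‖ ^ 2 ≤ ⟪q, p⟫ := by
  have h : ‖(0 : E) - p‖ = ⨅ w : K, ‖(0 : E) - w‖ := by
    have : Nonempty K := ⟨⟨p, hp⟩⟩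
    apply le_antisymm
    · apply le_ciInf
      intro w
      simpa using hmin w w.2
    · exact ciInf_le ⟨0, by rintro _ ⟨w, rfl⟩; exact norm_nonneg _⟩ (⟨p, hp⟩ : K)
  have := (norm_eq_iInf_iff_real_inner_le_zero hK hp).1 h q hq
  rw [zero_sub, inner_neg_left, inner_sub_right, real_inner_self_eq_norm_sq, real_inner_comm] at this
  linarith

lemma gd_main_s14 {f : E → ℝ} {g : E → E} (hg : ∀ x, HasGradientAt f (g x) x)
    (hf : ConvexOn ℝ Set.univ f) {L : ℝ} (hL : 0 < L)
    (hs : ∀ y z, ‖g y - g z‖ ≤ L * ‖y - z‖)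
    (x : ℕ → E) (hrec : ∀ i : ℕ, x (i + 1) = x i - (1 / L) • g (x i))
    (p : E) (hmem : p ∈ closure (Set.range g)) (hmin : ∀ q ∈ closure (Set.range g), ‖p‖ ≤ ‖q‖) :
    Tendsto (fun i => g (x i)) atTop (nhds p) ∧
    Tendsto (fun i : ℕ => ((i : ℝ))⁻¹ • x i) atTop (nhds (-((1 / L) • p))) := by
  have hL' : 0 < 1 / L := by positivity
  have hproj : ∀ y, ‖p‖ ^ 2 ≤ ⟪g y, p⟫ := fun y =>
    gd_proj (gd_convex hg hf hL hs) hmem hmin _ (subset_closure ⟨y, rfl⟩)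
  -- growth of the iterates
  have hgrow : ∀ (y : E) (k : ℕ), ‖x k - x 0‖ ≤ 2 * ‖x 0 - y‖ + k * (1 / L * ‖g y‖) := by
    intro y k
    let T : E → E := fun z => z - (1 / L) • g z
    have hT : ∀ a b, ‖T a - T b‖ ≤ ‖a - b‖ := gd_nonexp hg hf hL hs
    have hTk : ∀ k : ℕ, ‖x k - T^[k] y‖ ≤ ‖x 0 - y‖ ∧ ‖T^[k + 1] y - T^[k] y‖ ≤ 1 / L * ‖g y‖ ∧
        ‖T^[k] y - y‖ ≤ k * (1 / L * ‖g y‖) := by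
      intro k
      induction k with
      | zero =>
        refine ⟨by simp, ?_, by simp⟩
        simp [T, norm_smul, abs_of_pos hL]
      | succ k ih =>
        obtain ⟨h1, h2, h3⟩ := ih
        refine ⟨?_, ?_, ?_⟩
        · rw [Function.iterate_succ_apply', hrec]
          exact (hT _ _).trans h1
        · rw [Function.iterate_succ_apply' T (k + 1), Function.iterate_succ_apply' T k]
          rw [Function.iterate_succ_apply' T k] at h2
          exact (hT _ _).trans h2
        · have := norm_sub_le_norm_sub_add_norm_sub (T^[k + 1] y) (T^[k] y) y
          push_cast
          linarith
    obtain ⟨h1, -, h3⟩ := hTk k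
    have e1 := norm_sub_le_norm_sub_add_norm_sub (x k) (T^[k] y) (x 0)
    have e2 := norm_sub_le_norm_sub_add_norm_sub (T^[k] y) y (x 0)
    rw [norm_sub_rev y] at e2
    linarith
  have hinner : ∀ k : ℕ, ⟪x k - x 0, p⟫ ≤ -(k * (1 / L * ‖p‖ ^ 2)) := by
    intro k
    induction k with
    | zero => simp
    | succ k ih =>
      have e : x (k + 1) - x 0 = (x k - x 0) - (1 / L) • g (x k) := by rw [hrec]; abel
      rw [e, inner_sub_left, real_inner_smul_left]
      have := mul_le_mul_of_nonneg_left (hproj (x k)) hL'.le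
      push_cast
      linarith
  -- mean displacement
  set v : ℕ → E := fun k => ((k : ℝ))⁻¹ • (x k - x 0) with hv
  have hinv : Tendsto (fun k : ℕ => ((k : ℝ))⁻¹) atTop (nhds 0) := tendsto_inv_atTop_nhds_zero_nat
  have hvin : ∀ k : ℕ, 0 < k → ⟪v k, p⟫ ≤ -(1 / L * ‖p‖ ^ 2) := by
    intro k hk
    have hk' : (0 : ℝ) < k := by exact_mod_cast hk
    rw [hv]
    simp only
    rw [real_inner_smul_left, inv_mul_le_iff₀ hk']
    linarith [hinner k]
  have hvub : ∀ k : ℕ, 0 < k → ‖v k + (1 / L) • p‖ ^ 2 ≤ ‖v k‖ ^ 2 - (1 / L * ‖p‖) ^ 2 := by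
    intro k hk
    rw [norm_add_sq_real, inner_smul_right, norm_smul (1 / L) p, Real.norm_of_nonneg hL'.le]
    have := mul_le_mul_of_nonneg_left (hvin k hk) hL'.le
    nlinarith
  have hvle : ∀ (y : E) (k : ℕ), 0 < k →
      ‖v k‖ ≤ ((k : ℝ))⁻¹ * (2 * ‖x 0 - y‖) + 1 / L * ‖g y‖ := by
    intro y k hk
    have hk' : (0 : ℝ) < k := by exact_mod_cast hk
    rw [hv]
    simp only
    rw [norm_smul, Real.norm_of_nonneg (by positivity), inv_mul_le_iff₀ hk', mul_add,
      mul_inv_cancel_left₀ hk'.ne']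
    exact hgrow y k
  have hvnorm : Tendsto (fun k => ‖v k‖) atTop (nhds (1 / L * ‖p‖)) := by
    rw [tendsto_order]
    constructor
    · intro a ha
      filter_upwards [eventually_gt_atTop 0] with k hk
      have h := hvub k hk
      have : (1 / L * ‖p‖) ^ 2 ≤ ‖v k‖ ^ 2 := by nlinarith [sq_nonneg ‖v k + (1 / L) • p‖]
      exact ha.trans_le (le_of_sq_le_sq this (norm_nonneg _))
    · intro b hb
      have hopen : IsOpen {q : E | 1 / L * ‖q‖ < b} :=
        isOpen_lt (by fun_prop) continuous_const
      obtain ⟨_, hy, ⟨y, rfl⟩⟩ := mem_closure_iff.1 hmem _ hopen hb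
      have ht : Tendsto (fun k : ℕ => ((k : ℝ))⁻¹ * (2 * ‖x 0 - y‖) + 1 / L * ‖g y‖) atTop
          (nhds (0 * (2 * ‖x 0 - y‖) + 1 / L * ‖g y‖)) := (hinv.mul_const _).add_const _
      rw [zero_mul, zero_add] at ht
      filter_upwards [eventually_gt_atTop 0, ht.eventually_lt_const hy] with k hk hk2
      exact (hvle y k hk).trans_lt hk2
  have hsq : ∀ (u : ℕ → E), Tendsto (fun k => ‖u k‖ ^ 2) atTop (nhds 0) →
      Tendsto u atTop (nhds 0) := by
    intro u hu
    rw [tendsto_zero_iff_norm_tendsto_zero]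
    have := hu.sqrt
    simpa using this
  have hvlim : Tendsto v atTop (nhds (-((1 / L) • p))) := by
    have h0 : Tendsto (fun k => v k + (1 / L) • p) atTop (nhds 0) := by
      apply hsq
      have h1 : Tendsto (fun k => ‖v k‖ ^ 2 - (1 / L * ‖p‖) ^ 2) atTop (nhds 0) := by
        exact tendsto_sub_nhds_zero_iff.2 (hvnorm.pow 2)
      apply tendsto_of_tendsto_of_tendsto_of_le_of_le' tendsto_const_nhds h1
      · exact Eventually.of_forall fun k => sq_nonneg _
      · filter_upwards [eventually_gt_atTop 0] with k hk using hvub k hk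
    simpa using h0.sub_const ((1 / L) • p)
  have hxlim : Tendsto (fun i : ℕ => ((i : ℝ))⁻¹ • x i) atTop (nhds (-((1 / L) • p))) := by
    have h1 := hvlim.add (hinv.smul_const (x 0))
    rw [zero_smul, add_zero] at h1
    refine h1.congr fun k => ?_
    simp [hv, smul_sub]
  refine ⟨?_, hxlim⟩
  -- gradient norms
  have hmono : ∀ k, ‖g (x (k + 1))‖ ≤ ‖g (x k)‖ := by
    intro k
    have h := gd_nonexp hg hf hL hs (x k) (x (k + 1))
    rw [← hrec, ← hrec] at h
    have e : ∀ j, x j - x (j + 1) = (1 / L) • g (x j) := fun j => by rw [hrec]; abel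
    rw [e, e, norm_smul, norm_smul, Real.norm_of_nonneg hL'.le] at h
    exact le_of_mul_le_mul_left h hL'
  have hsum : ∀ k : ℕ, k * ‖g (x k)‖ ^ 2 ≤ L * (f (x 0) - f (x k)) := by
    intro k
    induction k with
    | zero => simp
    | succ k ih =>
      have h := gd_coco hg hf hL hs (x (k + 1)) (x k)
      have e : x k - x (k + 1) = (1 / L) • g (x k) := by rw [hrec]; abel
      rw [e, inner_smul_right, norm_sub_sq_real, real_inner_comm] at h
      have h2 := mul_le_mul_of_nonneg_left h hL.le
      have e2 : L * (f (x (k + 1)) + 1 / L * ⟪g (x k), g (x (k + 1))⟫ + 1 / (2 * L) *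
          (‖g (x k)‖ ^ 2 - 2 * ⟪g (x k), g (x (k + 1))⟫ + ‖g (x (k + 1))‖ ^ 2)) =
          L * f (x (k + 1)) + (‖g (x k)‖ ^ 2 + ‖g (x (k + 1))‖ ^ 2) / 2 := by
        field_simp; ring
      rw [e2] at h2
      have h3 : ‖g (x (k + 1))‖ ^ 2 ≤ ‖g (x k)‖ ^ 2 := by gcongr; exact hmono k
      have h4 := mul_le_mul_of_nonneg_left h3 (Nat.cast_nonneg (α := ℝ) k)
      push_cast
      linarith
  have hgle : ∀ (y : E) (k : ℕ), 0 < k → ‖g (x k)‖ ^ 2 ≤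
      ((k : ℝ))⁻¹ * (L * (f (x 0) - f y + ⟪g y, y⟫)) - L * ⟪g y, ((k : ℝ))⁻¹ • x k⟫ := by
    intro y k hk
    have hk' : (0 : ℝ) < k := by exact_mod_cast hk
    have h1 := gd_first hg hf y (x k)
    rw [inner_sub_right] at h1
    have h2 := hsum k
    have h3 := mul_le_mul_of_nonneg_left h1 hL.le
    have h4 : k * ‖g (x k)‖ ^ 2 ≤ L * (f (x 0) - f y + ⟪g y, y⟫) - L * ⟪g y, x k⟫ := by linarith
    rw [inner_smul_right]
    have h5 := mul_le_mul_of_nonneg_left h4 (inv_nonneg.2 hk'.le)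
    rw [inv_mul_cancel_left₀ hk'.ne'] at h5
    linarith
  have hgsub : ∀ k, ‖g (x k) - p‖ ^ 2 ≤ ‖g (x k)‖ ^ 2 - ‖p‖ ^ 2 := by
    intro k
    rw [norm_sub_sq_real]
    linarith [hproj (x k)]
  have hgn : Tendsto (fun k => ‖g (x k)‖ ^ 2) atTop (nhds (‖p‖ ^ 2)) := by
    rw [tendsto_order]
    constructor
    · intro a ha
      exact Eventually.of_forall fun k => by nlinarith [hgsub k, sq_nonneg ‖g (x k) - p‖]
    · intro b hb
      have hopen : IsOpen {q : E | ⟪q, p⟫ < b} :=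
        isOpen_lt (by fun_prop) continuous_const
      obtain ⟨_, hy, ⟨y, rfl⟩⟩ := mem_closure_iff.1 hmem _ hopen
        (by simpa [real_inner_self_eq_norm_sq] using hb)
      have ht := (hinv.mul_const (L * (f (x 0) - f y + ⟪g y, y⟫))).sub
        ((tendsto_const_nhds (x := g y)).inner hxlim |>.const_mul L)
      have e : 0 * (L * (f (x 0) - f y + ⟪g y, y⟫)) - L * ⟪g y, -((1 / L) • p)⟫ = ⟪g y, p⟫ := by
        rw [inner_neg_right, inner_smul_right]; field_simp; ring
      rw [e] at ht
      filter_upwards [eventually_gt_atTop 0, ht.eventually_lt_const hy] with k hk hk2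
      exact (hgle y k hk).trans_lt hk2
  have h0 : Tendsto (fun k => g (x k) - p) atTop (nhds 0) := by
    apply hsq
    have h1 : Tendsto (fun k => ‖g (x k)‖ ^ 2 - ‖p‖ ^ 2) atTop (nhds 0) := by
      exact tendsto_sub_nhds_zero_iff.2 hgn
    exact squeeze_zero (fun k => sq_nonneg _) hgsub h1
  simpa using h0.add_const p

end helpers

/-- Gradient descent as a minimum-norm point algorithm (Theorem 3.12(2)): if
`κ* := inf_y ‖∇f(y)‖ > 0`, `(x_i)` is the gradient-descent sequence with step size
`1/L`, and `p*` is the (unique) minimum-norm point of the closure of the gradient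
image `{∇f(y) : y ∈ ℝⁿ}`, then `∇f(x_i) → p*` and `x_i/i → -p*/L`. -/
theorem gradient_descent_minimum_norm_point {n : ℕ} (hn : 1 ≤ n)
    (f : EuclideanSpace ℝ (Fin n) → ℝ) (L : ℝ) (hL : 0 < L)
    (hconv : ConvexOn ℝ Set.univ f) (hdiff : Differentiable ℝ f)
    (hsmooth : ∀ y z : EuclideanSpace ℝ (Fin n),
      ‖gradient f y - gradient f z‖ ≤ L * ‖y - z‖)
    (hκ : 0 < ⨅ y, ‖gradient f y‖)
    (x : ℕ → EuclideanSpace ℝ (Fin n))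
    (hrec : ∀ i : ℕ, x (i + 1) = x i - (1 / L) • gradient f (x i))
    (p : EuclideanSpace ℝ (Fin n))
    (hmem : p ∈ closure (Set.range (gradient f)))
    (hmin : ∀ q ∈ closure (Set.range (gradient f)), ‖p‖ ≤ ‖q‖) :
    Tendsto (fun i => gradient f (x i)) atTop (nhds p) ∧
    Tendsto (fun i : ℕ => ((i : ℝ))⁻¹ • x i) atTop (nhds (-((1 / L) • p))) := by
  exact gd_main_s14 (fun y => (hdiff y).hasGradientAt) hconv hL hsmooth x hrec p hmem hmin
end

section
/- The unique unit-sphere minimizer of the recession function is opposite to the minimum-norm gradient point (claim in the proof of Theorem 3.12): suppose κ* := inf_{y ∈ ℝⁿ} ‖∇f(y)‖ > 0, and let p* be the unique minimum-norm point of the closure of the gradient image {∇f(y) : y ∈ ℝⁿ} (this closure is convex). Then p* ≠ 0, the unit vector u* := −p*/‖p*‖ satisfies f^∞(u*) = −‖p*‖, and every unit vector u ≠ u* satisfies f^∞(u) > −‖p*‖. -/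
open Filter
open scoped RealInnerProductSpace

theorem aux_subgrad {n : ℕ} (f : EuclideanSpace ℝ (Fin n) → ℝ)
    (hconv : ConvexOn ℝ Set.univ f) (hf : Differentiable ℝ f)
    (x y : EuclideanSpace ℝ (Fin n)) :
    f x + ⟪gradient f x, y - x⟫ ≤ f y := by
  have hc : ConvexOn ℝ Set.univ (f ∘ (AffineMap.lineMap x y : ℝ →ᵃ[ℝ] _)) := by
    simpa using hconv.comp_affineMap (AffineMap.lineMap x y : ℝ →ᵃ[ℝ] _)
  have hd : HasDerivAt (f ∘ (AffineMap.lineMap x y : ℝ →ᵃ[ℝ] _))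
      (fderiv ℝ f x (y - x)) 0 := by
    have h1 : HasDerivAt (AffineMap.lineMap x y : ℝ → _) (y - x) 0 :=
      AffineMap.hasDerivAt_lineMap
    have h2 : HasFDerivAt f (fderiv ℝ f x) ((AffineMap.lineMap x y : ℝ → _) 0) := by
      simpa using (hf x).hasFDerivAt
    exact h2.comp_hasDerivAt 0 h1
  have h := hc.le_slope_of_hasDerivAt (Set.mem_univ 0) (Set.mem_univ 1) one_pos hd
  rw [inner_gradient_left]
  simp [slope_def_field] at h
  simp only [map_sub]
  linarith

theorem aux_mem_closure {n : ℕ} (f : EuclideanSpace ℝ (Fin n) → ℝ)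
    (hf : Differentiable ℝ f) (v : EuclideanSpace ℝ (Fin n)) (C : ℝ)
    (hC : ∀ x, C + ⟪v, x⟫ ≤ f x) : v ∈ closure (Set.range (gradient f)) := by
  rw [Metric.mem_closure_range_iff]
  intro η hη
  have hM : 0 ≤ f 0 - C := by have := hC 0; simp at this; linarith
  set M := f 0 - C with hMdef
  obtain ⟨ε, hε, hεM⟩ : ∃ ε : ℝ, 0 < ε ∧ 4 * ε * M < η ^ 2 := by
    refine ⟨η ^ 2 / (4 * (M + 1)), by positivity, ?_⟩
    have : 4 * (η ^ 2 / (4 * (M + 1))) * M = η ^ 2 * (M / (M + 1)) := by field_simp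
    rw [this]
    have h2 : M / (M + 1) < 1 := by rw [div_lt_one (by linarith)]; linarith
    have : 0 < η ^ 2 := by positivity
    nlinarith
  let g : EuclideanSpace ℝ (Fin n) → ℝ := fun x => f x - ⟪v, x⟫ + ε * ‖x‖ ^ 2
  have hgc : Continuous g := by
    have := hf.continuous
    fun_prop
  have hlim : Tendsto g (cocompact _) atTop := by
    have h1 : Tendsto (fun x : EuclideanSpace ℝ (Fin n) => C + ε * ‖x‖ ^ 2)
        (cocompact _) atTop := by
      apply tendsto_atTop_add_const_left
      apply Tendsto.const_mul_atTop hε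
      exact (tendsto_pow_atTop two_ne_zero).comp tendsto_norm_cocompact_atTop
    refine tendsto_atTop_mono (fun x => ?_) h1
    have := hC x
    simp only [g]
    linarith
  obtain ⟨x, hx⟩ := hgc.exists_forall_le hlim
  have hder : HasFDerivAt g (fderiv ℝ f x - innerSL ℝ v + ε • (2 • innerSL ℝ x)) x := by
    refine ((hf x).hasFDerivAt.sub (innerSL ℝ v).hasFDerivAt).add ?_
    exact ((hasStrictFDerivAt_norm_sq x).hasFDerivAt).const_mul ε
  have hz := IsLocalMin.hasFDerivAt_eq_zero (Eventually.of_forall hx) hder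
  have hgrad : v - gradient f x = (2 * ε) • x := by
    apply ext_inner_right ℝ
    intro w
    have h := congrArg (fun L => L w) hz
    simp at h
    rw [inner_sub_left, inner_gradient_left, inner_smul_left]
    simp
    linarith
  refine ⟨x, ?_⟩
  rw [dist_eq_norm, hgrad, norm_smul]
  have h0 := hx 0
  simp [g] at h0
  have h1 := hC x
  have h2 : ε * ‖x‖ ^ 2 ≤ M := by linarith
  apply lt_of_pow_lt_pow_left₀ 2 hη.le
  rw [Real.norm_of_nonneg (by linarith)]
  nlinarith

theorem aux_variational {n : ℕ} (f : EuclideanSpace ℝ (Fin n) → ℝ)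
    (hconv : ConvexOn ℝ Set.univ f) (hf : Differentiable ℝ f)
    (p : EuclideanSpace ℝ (Fin n))
    (hmem : p ∈ closure (Set.range (gradient f)))
    (hmin : ∀ q ∈ closure (Set.range (gradient f)), ‖p‖ ≤ ‖q‖)
    (y : EuclideanSpace ℝ (Fin n)) : ‖p‖ ^ 2 ≤ ⟪p, gradient f y⟫ := by
  set q := gradient f y with hq
  have hcomb : ∀ t : ℝ, 0 ≤ t → t ≤ 1 →
      (1 - t) • p + t • q ∈ closure (Set.range (gradient f)) := by
    intro t h0 h1
    have : (1 - t) • p + t • q ∈ closure (closure (Set.range (gradient f))) := by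
      refine map_mem_closure (f := fun p => (1 - t) • p + t • q) (by fun_prop) hmem ?_
      rintro _ ⟨x, rfl⟩
      apply aux_mem_closure f hf _
        ((1 - t) * (f x - ⟪gradient f x, x⟫) + t * (f y - ⟪q, y⟫))
      intro z
      have a := aux_subgrad f hconv hf x z
      have b := aux_subgrad f hconv hf y z
      rw [inner_sub_right] at a b
      rw [inner_add_left, real_inner_smul_left, real_inner_smul_left]
      have a' := mul_le_mul_of_nonneg_left a (sub_nonneg.2 h1)
      have b' := mul_le_mul_of_nonneg_left b h0
      rw [← hq] at b'
      linarith
    rwa [closure_closure] at this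
  have key : ∀ t : ℝ, 0 < t → t ≤ 1 →
      0 ≤ 2 * (⟪p, q⟫ - ‖p‖ ^ 2) + t * ‖q - p‖ ^ 2 := by
    intro t h0 h1
    have h := hmin _ (hcomb t h0.le h1)
    have e : (1 - t) • p + t • q = p + t • (q - p) := by module
    rw [e] at h
    have h2 : ‖p‖ ^ 2 ≤ ‖p + t • (q - p)‖ ^ 2 := by gcongr
    rw [norm_add_sq_real, real_inner_smul_right, inner_sub_right, real_inner_self_eq_norm_sq,
      norm_smul, mul_pow, Real.norm_eq_abs, sq_abs] at h2
    have : 0 ≤ t * (2 * (⟪p, q⟫ - ‖p‖ ^ 2) + t * ‖q - p‖ ^ 2) := by linarith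
    exact nonneg_of_mul_nonneg_right this h0
  by_contra! hlt
  set c := ‖p‖ ^ 2 - ⟪p, q⟫ with hc
  have hcpos : 0 < c := by linarith
  set d := ‖q - p‖ ^ 2 with hd
  have hdn : 0 ≤ d := by positivity
  have hk := key (c / (c + d)) (by positivity) (by rw [div_le_one (by positivity)]; linarith)
  have : c / (c + d) * d ≤ c := by
    rw [div_mul_eq_mul_div, div_le_iff₀ (by positivity)]
    nlinarith
  linarith

theorem aux_lower {n : ℕ} (f : EuclideanSpace ℝ (Fin n) → ℝ)
    (hconv : ConvexOn ℝ Set.univ f) (hf : Differentiable ℝ f)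
    (q u : EuclideanSpace ℝ (Fin n))
    (hmem : q ∈ closure (Set.range (gradient f))) :
    ((⟪q, u⟫ : ℝ) : EReal) ≤ recessionFn f u := by
  have hcl : IsClosed {q : EuclideanSpace ℝ (Fin n) | ((⟪q, u⟫ : ℝ) : EReal) ≤ recessionFn f u} :=
    isClosed_le (continuous_coe_real_ereal.comp (by fun_prop)) continuous_const
  refine closure_minimal ?_ hcl hmem
  rintro _ ⟨y, rfl⟩
  have hlim : Tendsto (fun s : ℝ => ((⟪gradient f y, u⟫ +
      (f y - ⟪gradient f y, y⟫ - f 0) / s : ℝ) : EReal)) atTop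
      (nhds ((⟪gradient f y, u⟫ : ℝ) : EReal)) := by
    apply (continuous_coe_real_ereal.tendsto _).comp
    have h := (tendsto_const_nhds (x := f y - ⟪gradient f y, y⟫ - f 0)).div_atTop
      (tendsto_id (α := ℝ) (x := atTop))
    simpa using h.const_add ⟪gradient f y, u⟫
  refine le_of_tendsto hlim ?_
  filter_upwards [eventually_gt_atTop 0] with s hs
  refine le_trans ?_ (le_iSup₂ (f := fun (s : ℝ) (_ : 0 < s) =>
    (((f (s • u) - f 0) / s : ℝ) : EReal)) s hs)
  rw [EReal.coe_le_coe_iff, le_div_iff₀ hs, add_mul, div_mul_cancel₀ _ hs.ne']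
  have := aux_subgrad f hconv hf y (s • u)
  rw [inner_sub_right, real_inner_smul_right] at this
  linarith

/-- The unique unit-sphere minimizer of the recession function is opposite to the
minimum-norm gradient point (claim in the proof of Theorem 3.12): if
`κ* := inf_y ‖∇f(y)‖ > 0` and `p*` is the minimum-norm point of the closure of the
gradient image, then `p* ≠ 0`, the unit vector `u* := -p*/‖p*‖` satisfies
`f^∞(u*) = -‖p*‖`, and every unit vector `u ≠ u*` satisfies `f^∞(u) > -‖p*‖`. -/
theorem recession_minimizer_opposite_min_norm_gradient {n : ℕ} (hn : 1 ≤ n)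
    (f : EuclideanSpace ℝ (Fin n) → ℝ)
    (hconv : ConvexOn ℝ Set.univ f) (hf : ContDiff ℝ 1 f)
    (hκ : 0 < ⨅ y, ‖gradient f y‖)
    (p : EuclideanSpace ℝ (Fin n))
    (hmem : p ∈ closure (Set.range (gradient f)))
    (hmin : ∀ q ∈ closure (Set.range (gradient f)), ‖p‖ ≤ ‖q‖) :
    p ≠ 0 ∧
    recessionFn f (-(‖p‖⁻¹ • p)) = ((-‖p‖ : ℝ) : EReal) ∧
    ∀ u : EuclideanSpace ℝ (Fin n), ‖u‖ = 1 → u ≠ -(‖p‖⁻¹ • p) →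
      ((-‖p‖ : ℝ) : EReal) < recessionFn f u := by
  have hd : Differentiable ℝ f := hf.differentiable one_ne_zero
  have hp : p ≠ 0 := by
    rintro rfl
    rw [Metric.mem_closure_range_iff] at hmem
    obtain ⟨y, hy⟩ := hmem _ hκ
    rw [dist_zero_left] at hy
    have : ⨅ y, ‖gradient f y‖ ≤ ‖gradient f y‖ :=
      ciInf_le ⟨0, by rintro _ ⟨z, rfl⟩; exact norm_nonneg _⟩ y
    linarith
  have hpn : 0 < ‖p‖ := norm_pos_iff.2 hp
  refine ⟨hp, le_antisymm ?_ ?_, ?_⟩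
  · refine iSup₂_le fun s hs => ?_
    rw [EReal.coe_le_coe_iff, div_le_iff₀ hs]
    set u := -(‖p‖⁻¹ • p) with hu
    have h1 := aux_subgrad f hconv hd (s • u) 0
    have h2 := aux_variational f hconv hd p hmem hmin (s • u)
    rw [zero_sub, inner_neg_right, real_inner_smul_right] at h1
    have h3 : ⟪gradient f (s • u), u⟫ ≤ -‖p‖ := by
      conv_lhs => rw [hu]
      rw [← hu, inner_neg_right, real_inner_smul_right, real_inner_comm, neg_le_neg_iff,
        inv_mul_eq_div, le_div_iff₀ hpn]
      linarith
    nlinarith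
  · have h := aux_lower f hconv hd p (-(‖p‖⁻¹ • p)) hmem
    rw [inner_neg_right, real_inner_smul_right, real_inner_self_eq_norm_sq] at h
    have e : ‖p‖⁻¹ * ‖p‖ ^ 2 = ‖p‖ := by field_simp
    rwa [e] at h
  · intro u hu hne
    refine lt_of_lt_of_le ?_ (aux_lower f hconv hd p u hmem)
    rw [EReal.coe_lt_coe_iff]
    have hge : -‖p‖ ≤ ⟪p, u⟫ := by
      have := neg_le_of_abs_le (abs_real_inner_le_norm p u)
      rwa [hu, mul_one] at this
    refine lt_of_le_of_ne hge fun heq => hne ?_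
    have : ‖u + ‖p‖⁻¹ • p‖ ^ 2 = 0 := by
      rw [norm_add_sq_real, real_inner_smul_right, real_inner_comm, ← heq, norm_smul, hu,
        norm_inv, norm_norm]
      field_simp
      norm_num
    rw [← add_eq_zero_iff_eq_neg]
    simpa using this
end
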